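/- Let d ≥ 1, D ≥ 1, and let (A_n)_{n≥1} be rotor-router aggregation in ℤ^d built from any configuration of rotor stacks with discrepancy at most D. Then there is a constant C = C(d), independent of n, D, and the rotor configuration, such that for all n ≥ 1, ψ(A_n) ≤ ψ(B_n) + Φ(n) + C D^{2 − 1/(4d)} n^{1 + 1/d}. -/

import Mathlib

open scoped BigOperators Pointwise symmDiff
open MeasureTheory Filter

noncomputable section
open scoped Classical
namespace RotorRouterPaper

/-- Sites of the lattice `ℤ^d`. -/
abbrev Site (d : ℕ) := Fin d → ℤ

/-- The `i`-th standard basis vector of `ℤ^d`. -/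
def unitVec (d : ℕ) (i : Fin d) : Site d := fun j => if j = i then 1 else 0

/-- Squared Euclidean norm of a lattice point. -/
def nsq {d : ℕ} (x : Site d) : ℝ := ∑ i, ((x i : ℝ)) ^ 2

/-- Euclidean norm of a lattice point. -/
def enorm {d : ℕ} (x : Site d) : ℝ := Real.sqrt (nsq x)

/-- Adjacency `x ∼ y`: Euclidean distance one. -/
def Adj {d : ℕ} (x y : Site d) : Prop := nsq (x - y) = 1

/-- `ω_d`, the Lebesgue volume of the unit ball in `ℝ^d`. -/
def ballVol (d : ℕ) : ℝ := (volume (Metric.ball (0 : EuclideanSpace ℝ (Fin d)) 1)).toReal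

/-- The lattice ball `B_n = {y ∈ ℤ^d : ω_d ‖y‖^d < n}`. -/
def lball (d n : ℕ) : Set (Site d) := {y | ballVol d * enorm y ^ d < (n : ℝ)}

/-- Characterization of the expected exit time function of a (finite) region `A ⊆ ℤ^d`:
it vanishes off `A` and its discrete Laplacian is `-1` on `A`. -/
def IsExitFun (d : ℕ) (A : Set (Site d)) (e : Site d → ℝ) : Prop :=
  (∀ x, x ∉ A → e x = 0) ∧
  ∀ x ∈ A, (1 / (2 * (d : ℝ))) * (∑ i, (e (x + unitVec d i) + e (x - unitVec d i))) - e x = -1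

/-- The expected exit time function `x ↦ e_x(A)` (the unique function satisfying
`IsExitFun` when `A` is finite). -/
def exitFun (d : ℕ) (A : Set (Site d)) : Site d → ℝ :=
  if h : ∃ e, IsExitFun d A e then h.choose else 0

/-- `ē(A) = sup_x e_x(A)`. -/
def ebar (d : ℕ) (A : Set (Site d)) : ℝ := sSup (Set.range (exitFun d A))

/-- `φ(n) = sup {ē(A) - e_o(B_n) : A ⊆ ℤ^d, |A| = n}`. -/
def phi (d n : ℕ) : ℝ :=
  sSup {t | ∃ A : Set (Site d), A.Finite ∧ A.ncard = n ∧ t = ebar d A - exitFun d (lball d n) 0}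

/-- `Φ(n) = ∑_{j=1}^n φ(j)`. -/
def PhiSum (d n : ℕ) : ℝ := ∑ j ∈ Finset.Icc 1 n, phi d j

/-- `ψ(A) = ∑_{x ∈ A} ‖x‖²`. -/
def psi {d : ℕ} (A : Set (Site d)) : ℝ := ∑ᶠ x ∈ A, nsq x

/-- A cardinal direction in `ℤ^d`: one of `±e_1, …, ±e_d`. -/
abbrev Dir (d : ℕ) := Fin d × Bool

/-- The lattice step vector of a cardinal direction. -/
def dirVec (d : ℕ) (ε : Dir d) : Site d := if ε.2 then unitVec d ε.1 else -unitVec d ε.1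

/-- A configuration of rotor stacks `r` (with `r x i` the direction used for the
`(i+1)`-st visit to `x`) has discrepancy at most `D` if for every site, direction and `m ≥ 1`,
among the first `m` rotors of the stack each direction occurs `m/(2d)` times up to error `D`. -/
def HasDiscrepancy (d : ℕ) (D : ℝ) (r : Site d → ℕ → Dir d) : Prop :=
  ∀ (x : Site d) (ε : Dir d) (m : ℕ), 1 ≤ m →
    |(({i | i < m ∧ r x i = ε} : Set ℕ).ncard : ℝ) - (m : ℝ) / (2 * (d : ℝ))| ≤ D

/-- One step of rotor-router walk on a state (current position, visit counts so far):
the particle at `p` being visited for the `(c p + 1)`-st time moves in direction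
`r p (c p)` and the visit count at `p` increases by one. -/
def rstep {d : ℕ} (r : Site d → ℕ → Dir d) (s : Site d × (Site d → ℕ)) :
    Site d × (Site d → ℕ) :=
  (s.1 + dirVec d (r s.1 (s.2 s.1)), Function.update s.2 s.1 (s.2 s.1 + 1))

/-- The state after `t` steps of rotor-router walk started at the origin with visit counts `c`. -/
def walkState {d : ℕ} (r : Site d → ℕ → Dir d) (c : Site d → ℕ) (t : ℕ) :
    Site d × (Site d → ℕ) :=
  (rstep r)^[t] (0, c)

/-- The number of steps until the rotor-router walk started at the origin
(with carried-over visit counts `c`) first leaves the region `A`. -/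
def exitSteps {d : ℕ} (r : Site d → ℕ → Dir d) (A : Set (Site d)) (c : Site d → ℕ) : ℕ :=
  sInf {t | (walkState r c t).1 ∉ A}

/-- The state of rotor-router aggregation after `n` particles have walked and settled:
`(aggState r n).1` is the occupied region `A_{n+1}`, `(aggState r n).2.1` the accumulated
visit counts, and `(aggState r n).2.2` the total number `T_n` of steps taken so far. -/
def aggState {d : ℕ} (r : Site d → ℕ → Dir d) : ℕ → Set (Site d) × (Site d → ℕ) × ℕ
  | 0 => ({0}, fun _ => 0, 0)
  | n + 1 =>
      let s := aggState r n
      let τ := exitSteps r s.1 s.2.1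
      (insert (walkState r s.2.1 τ).1 s.1, (walkState r s.2.1 τ).2, s.2.2 + τ)

/-- The region `A_n` of rotor-router aggregation (for `n ≥ 1`). -/
def aggRegion {d : ℕ} (r : Site d → ℕ → Dir d) (n : ℕ) : Set (Site d) :=
  (aggState r (n - 1)).1

/-- `T_n`, the total number of steps taken by the first `n` particles. -/
def totalSteps {d : ℕ} (r : Site d → ℕ → Dir d) (n : ℕ) : ℕ := (aggState r n).2.2

/-- `A^□ = A + [-1/2,1/2]^d ⊆ ℝ^d`. -/
def box (d : ℕ) (A : Set (Site d)) : Set (EuclideanSpace ℝ (Fin d)) :=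
  {z | ∃ x ∈ A, ∀ i, |z i - (x i : ℝ)| ≤ 1 / 2}

/-- The closed Euclidean ball of unit volume centered at the origin of `ℝ^d`. -/
def unitVolBall (d : ℕ) : Set (EuclideanSpace ℝ (Fin d)) :=
  Metric.closedBall 0 (ballVol d ^ (-(1 : ℝ) / (d : ℝ)))

/-- `A ⊆ ℤ^d` is orthoconvex if every line parallel to a coordinate axis meets `A`
in an interval. -/
def Orthoconvex (d : ℕ) (A : Set (Site d)) : Prop :=
  ∀ x ∈ A, ∀ i : Fin d, ∀ k : ℤ, 0 < k → x + k • unitVec d i ∈ A →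
    ∀ j : ℤ, 0 < j → j < k → x + j • unitVec d i ∈ A

/-- The nonnegative orthant `Q ⊆ ℤ^d`. -/
def orthant (d : ℕ) : Set (Site d) := {x | ∀ i, 0 ≤ x i}

/-- The cube `C(o,r) = {x : ‖x‖_∞ ≤ r}`. -/
def cubeSet (d : ℕ) (r : ℕ) : Set (Site d) := {x | ∀ i, |x i| ≤ (r : ℤ)}

/-- The boundary `∂C(o,r) = {x : ‖x‖_∞ = r + 1 and x ∼ y for some y ∈ C(o,r)}`. -/
def cubeBdry (d : ℕ) (r : ℕ) : Set (Site d) :=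
  {x | (∀ i, |x i| ≤ (r : ℤ) + 1) ∧ (∃ i, |x i| = (r : ℤ) + 1) ∧ ∃ y ∈ cubeSet d r, Adj x y}

/-- Characterization of `h_r(x) = P_x(T_Q > T_{∂C(o,r)})`: it vanishes on
`Q ∩ (C(o,r) ∪ ∂C(o,r))`, equals `1` on `∂C(o,r) ∖ Q`, is discrete harmonic on
`C(o,r) ∖ Q`, and (as a normalization) vanishes off `C(o,r) ∪ ∂C(o,r)`. -/
def IsOrthHarm (d : ℕ) (r : ℕ) (h : Site d → ℝ) : Prop :=
  (∀ x, x ∉ cubeSet d r ∪ cubeBdry d r → h x = 0) ∧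
  (∀ x ∈ orthant d ∩ (cubeSet d r ∪ cubeBdry d r), h x = 0) ∧
  (∀ x ∈ cubeBdry d r \ orthant d, h x = 1) ∧
  (∀ x ∈ cubeSet d r \ orthant d,
    h x = (1 / (2 * (d : ℝ))) * ∑ i, (h (x + unitVec d i) + h (x - unitVec d i)))

/-- The function `h_r` of the previous characterization. -/
def orthHarm (d : ℕ) (r : ℕ) : Site d → ℝ :=
  if h : ∃ f, IsOrthHarm d r f then h.choose else 0

/-- `p(k,r) = sup {h_r(x) : ‖x‖_∞ ≤ k}`. -/
def pkr (d k r : ℕ) : ℝ :=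
  sSup {t | ∃ x : Site d, (∀ i, |x i| ≤ (k : ℤ)) ∧ t = orthHarm d r x}

/-- The exponent `γ_d` of Theorem 3.1. -/
def gam (d : ℕ) : ℝ :=
  if d = 1 then 1 else if d = 2 then 1 / 3
  else (2 : ℝ) ^ (-(d : ℝ)) / (2 * (d : ℝ) ^ 2 * Real.log 3)

/-
Let `e` be the expected exit time function of `A = A_n`. A particle that moves along a rotor
changes the sum of a function over all particles by an increment of that function, and the function
`‖·‖² + e` is harmonic on `A`. Hence `∑ ‖x‖² = ∑ (e 0 - e x)` over `x ∈ A` up to the discrepancy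
`D` times the total variation of `‖·‖²` and of `e` on `A`. The variation of `e` is controlled by its
Dirichlet energy and a Poincaré inequality, that of `‖·‖²` by the first moment of `A`, which
satisfies a quadratic inequality because of Cauchy-Schwarz.

In the main term, list the sites of `A` by decreasing exit time. If `j` sites precede `x`, then
`e 0 - e x` is at most the largest exit time of a region with `j` sites, hence at most
`φ(j) + e_o(B_j)`. Finally `e_o(B_j) ≤ (R + 1) ^ 2`, where `R` is the radius of the ball of volume
`j`, and the squares of these radii sum up to `ψ(B_n)` with an error of order `n ^ (1 + 1 / d)`.
-/

section Laplacian

variable {d : ℕ}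

/-- The discrete Laplacian of `ℤ^d`, normalized by the degree `2d`; it is bundled as a linear map
so that its compatibility with the vector space operations comes for free. -/
def lap (d : ℕ) : (Site d → ℝ) →ₗ[ℝ] Site d → ℝ where
  toFun f x := (1 / (2 * (d : ℝ))) * ∑ ε : Dir d, (f (x + dirVec d ε) - f x)
  map_add' f g := by
    ext x
    simp only [Pi.add_apply, add_sub_add_comm, Finset.sum_add_distrib, mul_add]
  map_smul' c f := by
    ext x
    simp only [Pi.smul_apply, smul_eq_mul, ← mul_sub, ← Finset.mul_sum, RingHom.id_apply]
    ring

lemma lap_apply (f : Site d → ℝ) (x : Site d) :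
    lap d f x = (1 / (2 * (d : ℝ))) * ∑ ε : Dir d, (f (x + dirVec d ε) - f x) := rfl

lemma lap_const (c : ℝ) : lap d (fun _ => c) = 0 := by
  ext x
  simp [lap_apply]

lemma sum_dirVec {M : Type*} [AddCommMonoid M] (F : Site d → M) :
    ∑ ε : Dir d, F (dirVec d ε) = ∑ i, (F (unitVec d i) + F (-unitVec d i)) := by
  simp [Fintype.sum_prod_type, dirVec]

lemma sum_dir_sub_eq_lap [NeZero d] (f : Site d → ℝ) (x : Site d) :
    ∑ ε : Dir d, (f (x + dirVec d ε) - f x) = 2 * d * lap d f x := by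
  have : (d : ℝ) ≠ 0 := NeZero.ne _
  rw [lap_apply]
  field_simp

lemma isExitFun_iff [NeZero d] {A : Set (Site d)} {e : Site d → ℝ} :
    IsExitFun d A e ↔ (∀ x ∉ A, e x = 0) ∧ ∀ x ∈ A, lap d e x = -1 := by
  have hd : (d : ℝ) ≠ 0 := NeZero.ne _
  have lap_eq (x : Site d) : lap d e x =
      (1 / (2 * (d : ℝ))) * (∑ i, (e (x + unitVec d i) + e (x - unitVec d i))) - e x := by
    rw [lap_apply, sum_dirVec fun v => e (x + v) - e x]
    simp only [← sub_eq_add_neg, Finset.sum_add_distrib, Finset.sum_sub_distrib,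
      Finset.sum_const, Finset.card_univ, Fintype.card_fin, nsmul_eq_mul]
    field_simp
    ring
  simp only [IsExitFun, lap_eq]

lemma eq_of_lap_nonneg_of_forall_le {f : Site d → ℝ} {x : Site d} (hlap : 0 ≤ lap d f x)
    (hmax : ∀ ε, f (x + dirVec d ε) ≤ f x) (ε : Dir d) : f (x + dirVec d ε) = f x := by
  have : NeZero d := ⟨ε.1.pos.ne'⟩
  have hterm (η : Dir d) : f (x + dirVec d η) - f x ≤ 0 := sub_nonpos.2 (hmax η)
  have hsum : ∑ η : Dir d, (f (x + dirVec d η) - f x) = 0 :=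
    le_antisymm (Finset.sum_nonpos fun η _ => hterm η)
      (by rw [sum_dir_sub_eq_lap]; positivity)
  exact sub_eq_zero.1 <|
    (Finset.sum_eq_zero_iff_of_nonpos fun η _ => hterm η).1 hsum ε (Finset.mem_univ ε)

/- A positive maximum over `A` would propagate to all neighbours of a maximizer; the maximizer with
the largest zeroth coordinate rules this out. -/
lemma nonpos_of_lap_nonneg [NeZero d] {A : Finset (Site d)} {f : Site d → ℝ}
    (hlap : ∀ x ∈ A, 0 ≤ lap d f x)
    (hbdry : ∀ x ∈ A, ∀ ε, x + dirVec d ε ∉ A → f (x + dirVec d ε) ≤ 0)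
    {x : Site d} (hx : x ∈ A) : f x ≤ 0 := by
  by_contra! hpos
  obtain ⟨z, hzA, hz⟩ := A.exists_max_image f ⟨x, hx⟩
  have hz_pos : 0 < f z := hpos.trans_le (hz x hx)
  obtain ⟨w, hw, hw_max⟩ := (A.filter fun y => f y = f z).exists_max_image (fun y => y 0)
    ⟨z, by simp [hzA]⟩
  obtain ⟨hwA, hwz⟩ := Finset.mem_filter.1 hw
  have hnbr (ε : Dir d) : f (w + dirVec d ε) ≤ f w := by
    rw [hwz]
    by_cases hmem : w + dirVec d ε ∈ A
    · exact hz _ hmem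
    · exact (hbdry w hwA ε hmem).trans hz_pos.le
  have heq := eq_of_lap_nonneg_of_forall_le (hlap w hwA) hnbr (0, true)
  have hmem : w + dirVec d (0, true) ∈ A := by
    by_contra hnot
    linarith [hbdry w hwA _ hnot]
  have := hw_max _ (Finset.mem_filter.2 ⟨hmem, heq.trans hwz⟩)
  simp [dirVec, unitVec] at this

lemma le_of_lap_le [NeZero d] {A : Finset (Site d)} {f g : Site d → ℝ}
    (hlap : ∀ x ∈ A, lap d g x ≤ lap d f x)
    (hbdry : ∀ x ∈ A, ∀ ε, x + dirVec d ε ∉ A → f (x + dirVec d ε) ≤ g (x + dirVec d ε))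
    {x : Site d} (hx : x ∈ A) : f x ≤ g x := by
  have := nonpos_of_lap_nonneg (f := f - g)
    (fun y hy => by simpa using hlap y hy) (fun y hy ε hε => by simpa using hbdry y hy ε hε) hx
  simpa using this

end Laplacian

section ExitFunction

variable {d : ℕ} [NeZero d]

lemma exists_isExitFun (A : Finset (Site d)) : ∃ e, IsExitFun d A e := by
  let extend : (A → ℝ) →ₗ[ℝ] Site d → ℝ := Function.ExtendByZero.linearMap ℝ Subtype.val
  have extend_of_mem (g : A → ℝ) (x : A) : extend g x = g x :=
    Subtype.val_injective.extend_apply g 0 x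
  have extend_of_notMem (g : A → ℝ) {x : Site d} (hx : x ∉ A) : extend g x = 0 :=
    Function.extend_apply' g (0 : Site d → ℝ) x fun ⟨y, hy⟩ => hx (hy ▸ y.2)
  let lapOn : (A → ℝ) →ₗ[ℝ] A → ℝ := LinearMap.funLeft ℝ ℝ Subtype.val ∘ₗ lap d ∘ₗ extend
  have lapOn_apply (g : A → ℝ) (x : A) : lapOn g x = lap d (extend g) x := rfl
  have hinj : Function.Injective lapOn := by
    refine (injective_iff_map_eq_zero lapOn).2 fun g hg => funext fun x => ?_
    have hlap (y) (hy : y ∈ A) : lap d (extend g) y = 0 :=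
      (lapOn_apply g ⟨y, hy⟩).symm.trans (congrFun hg _)
    have hle : extend g x ≤ (0 : ℝ) :=
      le_of_lap_le (f := extend g) (g := fun _ => 0) (fun y hy => by simp [hlap y hy, lap_const])
        (fun y _ ε hε => (extend_of_notMem g hε).le) x.2
    have hge : (0 : ℝ) ≤ extend g x :=
      le_of_lap_le (f := fun _ => 0) (g := extend g) (fun y hy => by simp [hlap y hy, lap_const])
        (fun y _ ε hε => (extend_of_notMem g hε).ge) x.2
    exact (extend_of_mem g x).symm.trans (hle.antisymm hge)
  obtain ⟨g, hg⟩ := LinearMap.injective_iff_surjective.1 hinj fun _ => -1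
  exact ⟨extend g, isExitFun_iff.2
    ⟨fun x hx => extend_of_notMem g hx, fun x hx => congrFun hg ⟨x, hx⟩⟩⟩

lemma isExitFun_exitFun (A : Finset (Site d)) : IsExitFun d A (exitFun d A) := by
  have h := exists_isExitFun A
  rw [exitFun, dif_pos h]
  exact h.choose_spec

lemma exitFun_of_notMem {A : Finset (Site d)} {x : Site d} (hx : x ∉ A) : exitFun d A x = 0 :=
  (isExitFun_exitFun A).1 x hx

lemma lap_exitFun {A : Finset (Site d)} {x : Site d} (hx : x ∈ A) :
    lap d (exitFun d A) x = -1 :=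
  (isExitFun_iff.1 (isExitFun_exitFun A)).2 x hx

lemma exitFun_nonneg (A : Finset (Site d)) (x : Site d) : 0 ≤ exitFun d A x := by
  by_cases hx : x ∈ A
  · exact le_of_lap_le (f := fun _ => 0) (fun y hy => by simp [lap_exitFun hy, lap_const])
      (fun y _ ε hε => (exitFun_of_notMem hε).ge) hx
  · exact (exitFun_of_notMem hx).ge

lemma support_exitFun_subset (A : Finset (Site d)) : (exitFun d A).support ⊆ A :=
  fun _ hx => by_contra fun hxA => hx (exitFun_of_notMem hxA)

lemma exitFun_le_ebar (A : Finset (Site d)) (x : Site d) : exitFun d A x ≤ ebar d A :=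
  have hfin : (Set.range (exitFun d A)).Finite :=
    (((A.finite_toSet.subset (support_exitFun_subset A)).image _).insert 0).subset
      (Function.range_subset_insert_image_support _)
  le_csSup hfin.bddAbove ⟨x, rfl⟩

lemma ebar_nonneg (A : Finset (Site d)) : 0 ≤ ebar d A :=
  (exitFun_nonneg A 0).trans (exitFun_le_ebar A 0)

lemma ebar_mono {A B : Finset (Site d)} (hAB : A ⊆ B) : ebar d A ≤ ebar d B := by
  refine ciSup_le fun x => ?_
  by_cases hx : x ∈ A
  · refine (le_of_lap_le (fun y hy => ?_) (fun y _ ε hε => ?_) hx).trans (exitFun_le_ebar B x)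
    · rw [lap_exitFun hy, lap_exitFun (hAB hy)]
    · exact (exitFun_of_notMem hε).trans_le (exitFun_nonneg B _)
  · exact (exitFun_of_notMem hx).trans_le (ebar_nonneg B)

lemma ebar_le_add_ebar_filter (A : Finset (Site d)) {t : ℝ} (ht : 0 ≤ t) :
    ebar d A ≤ t + ebar d (A.filter fun y => t < exitFun d A y : Finset (Site d)) := by
  set B := A.filter fun y => t < exitFun d A y
  have le_of_notMem {y : Site d} (hy : y ∉ B) : exitFun d A y ≤ t := by
    by_cases hyA : y ∈ A
    · exact not_lt.1 fun h => hy (Finset.mem_filter.2 ⟨hyA, h⟩)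
    · exact (exitFun_of_notMem hyA).trans_le ht
  refine ciSup_le fun x => ?_
  by_cases hx : x ∈ B
  · let g : Site d → ℝ := exitFun d B + fun _ => t
    have : exitFun d A x ≤ g x := le_of_lap_le
      (fun y hy => by simp [g, lap_const, lap_exitFun hy, lap_exitFun (Finset.mem_filter.1 hy).1])
      (fun y _ ε hε => by simpa [g, exitFun_of_notMem hε] using le_of_notMem hε) hx
    simp only [g, Pi.add_apply] at this
    linarith [exitFun_le_ebar B x]
  · linarith [le_of_notMem hx, ebar_nonneg B]

end ExitFunction

section TranslateEnergy

variable {G : Type*} [AddCommGroup G] {f : G → ℝ}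

lemma hasFiniteSupport_translate (hf : f.HasFiniteSupport) (v : G) :
    (fun x => f (x + v)).HasFiniteSupport :=
  .fun_comp_of_injective (add_left_injective v) hf

lemma summable_sq {ι : Type*} {a : ι → ℝ} (ha : a.HasFiniteSupport) :
    Summable fun x => a x ^ 2 :=
  summable_of_hasFiniteSupport (by simpa only [sq] using ha.fun_mul_right a)

lemma sqrt_tsum_add_sq_le {ι : Type*} {a b : ι → ℝ} (ha : a.HasFiniteSupport)
    (hb : b.HasFiniteSupport) :
    √(∑' x, (a x + b x) ^ 2) ≤ √(∑' x, a x ^ 2) + √(∑' x, b x ^ 2) := by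
  have hzero {x : ι} (hx : x ∉ (ha.union hb).toFinset) : a x = 0 ∧ b x = 0 := by
    simpa [not_or] using hx
  rw [tsum_eq_sum fun x hx => by simp [hzero hx], tsum_eq_sum fun x hx => by simp [hzero hx],
    tsum_eq_sum fun x hx => by simp [hzero hx]]
  simpa [Real.sqrt_eq_rpow] using Real.Lp_add_le (ha.union hb).toFinset a b one_le_two

/-- The squared `ℓ²` distance between `f` and its translate by `v`, used to turn the Dirichlet
energy into a Poincaré-type inequality. -/
def translateEnergy (f : G → ℝ) (v : G) : ℝ := ∑' x, (f (x + v) - f x) ^ 2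

lemma translateEnergy_nonneg (f : G → ℝ) (v : G) : 0 ≤ translateEnergy f v :=
  tsum_nonneg fun _ => sq_nonneg _

lemma translateEnergy_eq (hf : f.HasFiniteSupport) (v : G) :
    translateEnergy f v = 2 * (∑' x, f x ^ 2 - ∑' x, f (x + v) * f x) := by
  have hprod : Summable fun x => f (x + v) * f x :=
    summable_of_hasFiniteSupport (hf.fun_mul_right _)
  have htranslate_summable : Summable fun x => f (x + v) ^ 2 :=
    summable_sq (hasFiniteSupport_translate hf v)
  have htranslate : ∑' x, f (x + v) ^ 2 = ∑' x, f x ^ 2 :=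
    (Equiv.addRight v).tsum_eq fun x => f x ^ 2
  calc translateEnergy f v
      = ∑' x, (f (x + v) ^ 2 + f x ^ 2 - 2 * (f (x + v) * f x)) :=
        tsum_congr fun x => by ring
    _ = ∑' x, f (x + v) ^ 2 + ∑' x, f x ^ 2 - 2 * ∑' x, f (x + v) * f x := by
        rw [(htranslate_summable.add (summable_sq hf)).tsum_sub (hprod.mul_left 2),
          htranslate_summable.tsum_add (summable_sq hf), tsum_mul_left]
    _ = 2 * (∑' x, f x ^ 2 - ∑' x, f (x + v) * f x) := by rw [htranslate]; ring

lemma hasFiniteSupport_translate_sub (hf : f.HasFiniteSupport) (v : G) :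
    (fun x => f (x + v) - f x).HasFiniteSupport :=
  (hasFiniteSupport_translate hf v).fun_sub hf

lemma sqrt_translateEnergy_add_le (hf : f.HasFiniteSupport) (v w : G) :
    √(translateEnergy f (v + w)) ≤ √(translateEnergy f v) + √(translateEnergy f w) := by
  have hshift : ∑' x, (f (x + w + v) - f (x + w)) ^ 2 = translateEnergy f v :=
    (Equiv.addRight w).tsum_eq fun x => (f (x + v) - f x) ^ 2
  have hsum : ∑' x, (f (x + w + v) - f (x + w) + (f (x + w) - f x)) ^ 2
      = translateEnergy f (v + w) :=
    tsum_congr fun x => by rw [sub_add_sub_cancel, add_assoc, add_comm w]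
  rw [← hshift, ← hsum]
  exact sqrt_tsum_add_sq_le
    (hasFiniteSupport_translate (hasFiniteSupport_translate_sub hf v) w)
    (hasFiniteSupport_translate_sub hf w)

lemma sqrt_translateEnergy_nsmul_le (hf : f.HasFiniteSupport) (v : G) (k : ℕ) :
    √(translateEnergy f (k • v)) ≤ k * √(translateEnergy f v) := by
  induction k with
  | zero => simp [translateEnergy]
  | succ k ih =>
    rw [succ_nsmul]
    refine (sqrt_translateEnergy_add_le hf _ _).trans ?_
    push_cast
    linarith

lemma sum_tsum_translate_mul_le {A V : Finset G} (hf : f.support ⊆ A) (hf_nonneg : 0 ≤ f) :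
    ∑ v ∈ V, ∑' x, f (x + v) * f x ≤ A.card * ∑' x, f x ^ 2 := by
  have hinner (x : G) : ∑ v ∈ V, f (x + v) ≤ ∑ y ∈ A, f y := by
    rw [← tsum_eq_sum' (L := .unconditional G) hf, ← (Equiv.addLeft x).tsum_eq f]
    refine Summable.sum_le_tsum V (fun v _ => hf_nonneg _) ((Equiv.addLeft x).summable_iff.2 ?_)
    exact summable_of_hasFiniteSupport (A.finite_toSet.subset hf)
  have htsum (v : G) : ∑' x, f (x + v) * f x = ∑ x ∈ A, f (x + v) * f x :=
    tsum_eq_sum' ((Function.support_mul_subset_right _ _).trans hf)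
  have hsq : ∑' x, f x ^ 2 = ∑ x ∈ A, f x ^ 2 :=
    tsum_eq_sum' fun x hx => hf fun hfx => hx (by simp [hfx])
  calc ∑ v ∈ V, ∑' x, f (x + v) * f x
      = ∑ x ∈ A, (∑ v ∈ V, f (x + v)) * f x := by
        simp only [htsum, Finset.sum_mul]
        exact Finset.sum_comm
    _ ≤ ∑ x ∈ A, (∑ y ∈ A, f y) * f x :=
        Finset.sum_le_sum fun x _ => mul_le_mul_of_nonneg_right (hinner x) (hf_nonneg x)
    _ = (∑ x ∈ A, f x) ^ 2 := by rw [← Finset.mul_sum, sq]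
    _ ≤ A.card * ∑' x, f x ^ 2 := hsq ▸ sq_sum_le_card_mul_sum_sq

/- Averaging the translation energies over more than twice as many translations as `f` has points
in its support leaves room for at most half of the correlations. -/
lemma card_mul_tsum_sq_le_sum_translateEnergy {A V : Finset G} (hf : f.support ⊆ A)
    (hf_nonneg : 0 ≤ f) (hcard : 2 * A.card ≤ V.card) :
    V.card * ∑' x, f x ^ 2 ≤ ∑ v ∈ V, translateEnergy f v := by
  have hsum : ∑ v ∈ V, translateEnergy f v
      = 2 * (V.card * ∑' x, f x ^ 2 - ∑ v ∈ V, ∑' x, f (x + v) * f x) := by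
    simp only [translateEnergy_eq (A.finite_toSet.subset hf), ← Finset.mul_sum,
      Finset.sum_sub_distrib, Finset.sum_const, nsmul_eq_mul]
  have hcard' : 2 * (A.card : ℝ) ≤ V.card := by exact_mod_cast hcard
  have hsq : (0 : ℝ) ≤ ∑' x, f x ^ 2 := tsum_nonneg fun x => sq_nonneg _
  linarith [sum_tsum_translate_mul_le (V := V) hf hf_nonneg, mul_le_mul_of_nonneg_right hcard' hsq]

end TranslateEnergy

section DirichletEnergy

variable {d : ℕ} {f : Site d → ℝ}

/-- The Dirichlet energy of `f`, in which every edge of `ℤ^d` counts in both directions. -/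
def dirichletEnergy (f : Site d → ℝ) : ℝ := ∑ ε : Dir d, translateEnergy f (dirVec d ε)

lemma dirichletEnergy_nonneg (f : Site d → ℝ) : 0 ≤ dirichletEnergy f :=
  Finset.sum_nonneg fun _ _ => translateEnergy_nonneg _ _

lemma translateEnergy_dirVec_le (f : Site d → ℝ) (ε : Dir d) :
    translateEnergy f (dirVec d ε) ≤ dirichletEnergy f :=
  Finset.single_le_sum (f := fun η => translateEnergy f (dirVec d η))
    (fun _ _ => translateEnergy_nonneg _ _) (Finset.mem_univ ε)

lemma dirichletEnergy_eq [NeZero d] (hf : f.HasFiniteSupport) :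
    dirichletEnergy f = -(4 * d) * ∑' x, lap d f x * f x := by
  have hsummable (g : Site d → ℝ) : Summable fun x => g x * f x :=
    summable_of_hasFiniteSupport (hf.fun_mul_right g)
  have hterm (ε : Dir d) : translateEnergy f (dirVec d ε)
      = -2 * ∑' x, (f (x + dirVec d ε) - f x) * f x := by
    simp only [translateEnergy_eq hf, sub_mul]
    rw [(hsummable fun x => f (x + dirVec d ε)).tsum_sub (hsummable f)]
    simp only [sq]
    ring
  rw [dirichletEnergy, Finset.sum_congr rfl fun ε _ => hterm ε, ← Finset.mul_sum,
    ← Summable.tsum_finsetSum fun ε _ => hsummable fun x => f (x + dirVec d ε) - f x]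
  simp only [← Finset.sum_mul, sum_dir_sub_eq_lap, mul_assoc, tsum_mul_left]
  ring

lemma eq_sum_natAbs_smul_dirVec (v : Site d) :
    v = ∑ i, (v i).natAbs • dirVec d (i, decide (0 ≤ v i)) := by
  ext j
  have hterm (i : Fin d) : ((v i).natAbs • dirVec d (i, decide (0 ≤ v i))) j
      = if i = j then v j else 0 := by
    rcases eq_or_ne i j with rfl | hij
    · rcases le_or_gt 0 (v i) with h | h
      · simp [dirVec, unitVec, h, abs_of_nonneg h]
      · simp [dirVec, unitVec, h.not_ge, abs_of_neg h]
    · by_cases h : 0 ≤ v i <;> simp [dirVec, unitVec, h, hij, hij.symm]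
  rw [Finset.sum_apply, Finset.sum_congr rfl fun i _ => hterm i, Finset.sum_ite_eq' _ j]
  simp

lemma sqrt_translateEnergy_le_sum_natAbs_mul (hf : f.HasFiniteSupport) (v : Site d) :
    √(translateEnergy f v) ≤ (∑ i, ((v i).natAbs : ℝ)) * √(dirichletEnergy f) := by
  calc √(translateEnergy f v)
      = √(translateEnergy f (∑ i, (v i).natAbs • dirVec d (i, decide (0 ≤ v i)))) := by
        rw [← eq_sum_natAbs_smul_dirVec v]
    _ ≤ ∑ i, √(translateEnergy f ((v i).natAbs • dirVec d (i, decide (0 ≤ v i)))) :=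
        Finset.le_sum_of_subadditive (fun v => √(translateEnergy f v)) (by simp [translateEnergy])
          (sqrt_translateEnergy_add_le hf) _ _
    _ ≤ ∑ i, (v i).natAbs * √(dirichletEnergy f) := by
        refine Finset.sum_le_sum fun i _ => (sqrt_translateEnergy_nsmul_le hf _ _).trans ?_
        gcongr
        exact translateEnergy_dirVec_le f _
    _ = (∑ i, ((v i).natAbs : ℝ)) * √(dirichletEnergy f) := by rw [Finset.sum_mul]

lemma translateEnergy_le_of_natAbs_le (hf : f.HasFiniteSupport) {v : Site d} {L : ℕ}
    (hv : ∀ i, (v i).natAbs ≤ L) : translateEnergy f v ≤ (d * L) ^ 2 * dirichletEnergy f := by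
  have hsum : ∑ i, ((v i).natAbs : ℝ) ≤ d * L := by
    simpa using Finset.sum_le_card_nsmul Finset.univ (fun i => ((v i).natAbs : ℝ)) L
      fun i _ => by exact_mod_cast hv i
  have hsqrt : √(translateEnergy f v) ≤ d * L * √(dirichletEnergy f) :=
    (sqrt_translateEnergy_le_sum_natAbs_mul hf v).trans (by gcongr)
  rwa [Real.sqrt_le_left (by positivity), mul_pow, Real.sq_sqrt (dirichletEnergy_nonneg f)]
    at hsqrt

lemma tsum_sq_le_mul_dirichletEnergy {A : Finset (Site d)} (hf : f.support ⊆ A) (hf_nonneg : 0 ≤ f)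
    {L : ℕ} (hL : 0 < L) (hcard : 2 * A.card ≤ L ^ d) :
    ∑' x, f x ^ 2 ≤ (d * L) ^ 2 * dirichletEnergy f := by
  let V : Finset (Site d) := Fintype.piFinset fun _ => Finset.Ico 0 (L : ℤ)
  have hV : V.card = L ^ d := by simp [V]
  have hV_pos : (0 : ℝ) < V.card := by rw [hV]; positivity
  have hbound (v) (hv : v ∈ V) : translateEnergy f v ≤ (d * L) ^ 2 * dirichletEnergy f :=
    translateEnergy_le_of_natAbs_le (A.finite_toSet.subset hf) fun i => by
      have := Finset.mem_Ico.1 (Fintype.mem_piFinset.1 hv i)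
      omega
  refine le_of_mul_le_mul_left ?_ hV_pos
  calc V.card * ∑' x, f x ^ 2 ≤ ∑ v ∈ V, translateEnergy f v :=
        card_mul_tsum_sq_le_sum_translateEnergy hf hf_nonneg (hV ▸ hcard)
    _ ≤ V.card * ((d * L) ^ 2 * dirichletEnergy f) := by
        simpa using Finset.sum_le_card_nsmul V _ _ hbound

/-- The total variation of `f` across the edges at `x`; it weighs the rotor discrepancy. -/
def gradNorm (f : Site d → ℝ) (x : Site d) : ℝ := ∑ ε : Dir d, |f (x + dirVec d ε) - f x|

lemma gradNorm_add_le (f g : Site d → ℝ) (x : Site d) :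
    gradNorm (f + g) x ≤ gradNorm f x + gradNorm g x := by
  rw [gradNorm, gradNorm, gradNorm, ← Finset.sum_add_distrib]
  exact Finset.sum_le_sum fun ε _ => by
    simpa only [Pi.add_apply, add_sub_add_comm] using abs_add_le _ _

lemma sum_gradNorm_sq_le (hf : f.HasFiniteSupport) (A : Finset (Site d)) :
    (∑ x ∈ A, gradNorm f x) ^ 2 ≤ 2 * d * A.card * dirichletEnergy f := by
  have hterm (ε : Dir d) :
      ∑ x ∈ A, (f (x + dirVec d ε) - f x) ^ 2 ≤ translateEnergy f (dirVec d ε) :=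
    (summable_sq (hasFiniteSupport_translate_sub hf _)).sum_le_tsum A fun _ _ => sq_nonneg _
  calc (∑ x ∈ A, gradNorm f x) ^ 2
      = (∑ p ∈ A ×ˢ (Finset.univ : Finset (Dir d)), |f (p.1 + dirVec d p.2) - f p.1|) ^ 2 := by
        rw [Finset.sum_product]
        rfl
    _ ≤ (A ×ˢ (Finset.univ : Finset (Dir d))).card
          * ∑ p ∈ A ×ˢ (Finset.univ : Finset (Dir d)), |f (p.1 + dirVec d p.2) - f p.1| ^ 2 :=
        sq_sum_le_card_mul_sum_sq
    _ = 2 * d * A.card * ∑ ε : Dir d, ∑ x ∈ A, (f (x + dirVec d ε) - f x) ^ 2 := by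
        simp only [sq_abs, Finset.sum_product_right, Finset.card_product, Finset.card_univ,
          Fintype.card_prod, Fintype.card_fin, Fintype.card_bool]
        push_cast
        ring
    _ ≤ 2 * d * A.card * dirichletEnergy f := by
        gcongr
        exact Finset.sum_le_sum fun ε _ => hterm ε

end DirichletEnergy

section ExitTimeBounds

variable {d : ℕ} [NeZero d] {A : Finset (Site d)}

lemma dirichletEnergy_exitFun (A : Finset (Site d)) :
    dirichletEnergy (exitFun d A) = 4 * d * ∑ x ∈ A, exitFun d A x := by
  have hsupport := support_exitFun_subset A
  rw [dirichletEnergy_eq (A.finite_toSet.subset hsupport),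
    tsum_eq_sum' ((Function.support_mul_subset_right _ _).trans hsupport)]
  have hterm (x) (hx : x ∈ A) : lap d (exitFun d A) x * exitFun d A x = -exitFun d A x := by
    rw [lap_exitFun hx, neg_one_mul]
  rw [Finset.sum_congr rfl hterm, Finset.sum_neg_distrib]
  ring

lemma tsum_exitFun_sq_le {q : ℝ} (hq : 1 ≤ q) (hA : (A.card : ℝ) ≤ q ^ d) :
    ∑' x, exitFun d A x ^ 2 ≤ 36 * d ^ 3 * q ^ 2 * ∑ x ∈ A, exitFun d A x := by
  have hL_ge : 2 * q ≤ ⌈2 * q⌉₊ := Nat.le_ceil _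
  have hL_le : (⌈2 * q⌉₊ : ℝ) ≤ 3 * q := by
    linarith [Nat.ceil_lt_add_one (show 0 ≤ 2 * q by linarith)]
  have hcard : 2 * (A.card : ℝ) ≤ (⌈2 * q⌉₊ : ℝ) ^ d :=
    calc 2 * (A.card : ℝ) ≤ 2 ^ d * q ^ d := by
          gcongr
          exact le_self_pow₀ one_le_two (NeZero.ne d)
      _ = (2 * q) ^ d := (mul_pow _ _ _).symm
      _ ≤ (⌈2 * q⌉₊ : ℝ) ^ d := by gcongr
  have hsum_nonneg : 0 ≤ ∑ x ∈ A, exitFun d A x := Finset.sum_nonneg fun x _ => exitFun_nonneg A x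
  calc ∑' x, exitFun d A x ^ 2
      ≤ (d * (⌈2 * q⌉₊ : ℝ)) ^ 2 * dirichletEnergy (exitFun d A) :=
        tsum_sq_le_mul_dirichletEnergy (support_exitFun_subset A) (exitFun_nonneg A)
          (Nat.ceil_pos.2 (by linarith)) (by exact_mod_cast hcard)
    _ ≤ (d * (3 * q)) ^ 2 * (4 * d * ∑ x ∈ A, exitFun d A x) := by
        rw [dirichletEnergy_exitFun]
        gcongr
    _ = 36 * d ^ 3 * q ^ 2 * ∑ x ∈ A, exitFun d A x := by ring

lemma sum_exitFun_le {q : ℝ} (hq : 1 ≤ q) (hA : (A.card : ℝ) ≤ q ^ d) :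
    ∑ x ∈ A, exitFun d A x ≤ 36 * d ^ 3 * q ^ 2 * A.card := by
  set S := ∑ x ∈ A, exitFun d A x with hS
  have hS_nonneg : 0 ≤ S := Finset.sum_nonneg fun x _ => exitFun_nonneg A x
  have htsum : ∑' x, exitFun d A x ^ 2 = ∑ x ∈ A, exitFun d A x ^ 2 :=
    tsum_eq_sum fun x hx => by simp [exitFun_of_notMem hx]
  have hself : S * S ≤ 36 * d ^ 3 * q ^ 2 * A.card * S :=
    calc S * S = S ^ 2 := (sq S).symm
      _ ≤ A.card * ∑ x ∈ A, exitFun d A x ^ 2 := sq_sum_le_card_mul_sum_sq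
      _ ≤ A.card * (36 * d ^ 3 * q ^ 2 * S) := by
          gcongr
          exact htsum ▸ tsum_exitFun_sq_le hq hA
      _ = 36 * d ^ 3 * q ^ 2 * A.card * S := by ring
  rcases hS_nonneg.eq_or_lt with hzero | hpos
  · rw [← hzero]
    positivity
  · exact le_of_mul_le_mul_right hself hpos

lemma sum_gradNorm_exitFun_le {q : ℝ} (hq : 1 ≤ q) (hA : (A.card : ℝ) ≤ q ^ d) :
    ∑ x ∈ A, gradNorm (exitFun d A) x ≤ 17 * d ^ 3 * q * A.card := by
  have hd : (1 : ℝ) ≤ d := by exact_mod_cast NeZero.one_le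
  refine abs_le_of_sq_le_sq' ?_ (by positivity) |>.2
  calc (∑ x ∈ A, gradNorm (exitFun d A) x) ^ 2
      ≤ 2 * d * A.card * (4 * d * ∑ x ∈ A, exitFun d A x) := by
        rw [← dirichletEnergy_exitFun]
        exact sum_gradNorm_sq_le (A.finite_toSet.subset (support_exitFun_subset A)) A
    _ ≤ 2 * d * A.card * (4 * d * (36 * d ^ 3 * q ^ 2 * A.card)) := by
        gcongr
        exact sum_exitFun_le hq hA
    _ = 288 * (d ^ 5 * (q * A.card) ^ 2) := by ring
    _ ≤ 289 * (d ^ 6 * (q * A.card) ^ 2) := by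
        gcongr <;> norm_num
    _ = (17 * d ^ 3 * q * A.card) ^ 2 := by ring

lemma card_filter_lt_exitFun_le {q : ℝ} (hq : 1 ≤ q) (hA : (A.card : ℝ) ≤ q ^ d) :
    2 ^ d * ((A.filter fun y => 2 ^ d * (36 * d ^ 3 * q ^ 2) < exitFun d A y).card : ℝ)
      ≤ A.card := by
  set K : ℝ := 36 * d ^ 3 * q ^ 2
  have hK_pos : 0 < K := by
    have : (0 : ℝ) < d := by exact_mod_cast NeZero.pos d
    positivity
  set B := A.filter fun y => 2 ^ d * K < exitFun d A y
  refine le_of_mul_le_mul_left ?_ hK_pos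
  calc K * (2 ^ d * (B.card : ℝ)) = ∑ x ∈ B, 2 ^ d * K := by
        simp only [Finset.sum_const, nsmul_eq_mul]
        ring
    _ ≤ ∑ x ∈ B, exitFun d A x := Finset.sum_le_sum fun x hx => (Finset.mem_filter.1 hx).2.le
    _ ≤ ∑ x ∈ A, exitFun d A x := Finset.sum_le_sum_of_subset_of_nonneg
        (Finset.filter_subset _ _) fun x _ _ => exitFun_nonneg A x
    _ ≤ K * A.card := sum_exitFun_le hq hA

/- By Markov's inequality the set where the exit time exceeds a multiple of `q ^ 2` has at most
`(q / 2) ^ d` points, so iterating gives a geometric series. -/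
lemma ebar_le (A : Finset (Site d)) {q : ℝ} (hq : 0 ≤ q) (hA : (A.card : ℝ) ≤ q ^ d) :
    ebar d A ≤ 48 * 2 ^ d * d ^ 3 * q ^ 2 := by
  induction hn : A.card using Nat.strong_induction_on generalizing A q with
  | _ n ih =>
  subst hn
  rcases A.eq_empty_or_nonempty with rfl | hne
  · have : ebar d (∅ : Finset (Site d)) ≤ 0 :=
      ciSup_le fun x => (exitFun_of_notMem (Finset.notMem_empty x)).le
    exact this.trans (by positivity)
  have hcard_one : (1 : ℝ) ≤ A.card := by exact_mod_cast hne.card_pos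
  have hq_one : 1 ≤ q := (one_le_pow_iff_of_nonneg hq (NeZero.ne d)).1 (hcard_one.trans hA)
  have hB := card_filter_lt_exitFun_le hq_one hA
  set t : ℝ := 2 ^ d * (36 * d ^ 3 * q ^ 2) with ht
  set B := A.filter fun y => t < exitFun d A y
  have hB_lt : B.card < A.card := by
    have htwo : (2 : ℝ) ≤ 2 ^ d := le_self_pow₀ one_le_two (NeZero.ne d)
    have : (B.card : ℝ) < A.card := by
      nlinarith [mul_le_mul_of_nonneg_right htwo (Nat.cast_nonneg (α := ℝ) B.card)]
    exact_mod_cast this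
  have hB_le : (B.card : ℝ) ≤ (q / 2) ^ d := by
    rw [div_pow, le_div_iff₀' (by positivity)]
    exact hB.trans hA
  calc ebar d A ≤ t + ebar d B := ebar_le_add_ebar_filter A (by positivity)
    _ ≤ t + 48 * 2 ^ d * d ^ 3 * (q / 2) ^ 2 := by
        gcongr
        exact ih B.card hB_lt B (by positivity) hB_le rfl
    _ = 48 * 2 ^ d * d ^ 3 * q ^ 2 := by
        rw [ht]
        ring

end ExitTimeBounds

section RotorWalk

variable {d : ℕ} {D : ℝ} {r : Site d → ℕ → Dir d}

/-- The total increment of `f` along the first `m` rotors at `x`. -/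
def rotorIncrement (r : Site d → ℕ → Dir d) (f : Site d → ℝ) (x : Site d) (m : ℕ) : ℝ :=
  ∑ i ∈ Finset.range m, (f (x + dirVec d (r x i)) - f x)

lemma rotorIncrement_zero (r : Site d → ℕ → Dir d) (f : Site d → ℝ) (x : Site d) :
    rotorIncrement r f x 0 = 0 := rfl

lemma HasDiscrepancy.abs_card_sub_le (hr : HasDiscrepancy d D r) (x : Site d) (ε : Dir d) (m : ℕ) :
    |(((Finset.range m).filter fun i => r x i = ε).card : ℝ) - m / (2 * d)| ≤ D := by
  rcases m.eq_zero_or_pos with rfl | hm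
  · simpa using (abs_nonneg _).trans (hr x ε 1 le_rfl)
  · have hset : {i | i < m ∧ r x i = ε}
        = ((Finset.range m).filter fun i => r x i = ε : Finset ℕ) := by
      ext i
      simp
    simpa only [hset, Set.ncard_coe_finset] using hr x ε m hm

lemma HasDiscrepancy.abs_rotorIncrement_sub_le (hr : HasDiscrepancy d D r) (f : Site d → ℝ)
    (x : Site d) (m : ℕ) : |rotorIncrement r f x m - m * lap d f x| ≤ D * gradNorm f x := by
  have hsum : rotorIncrement r f x m = ∑ ε : Dir d,
      ((Finset.range m).filter fun i => r x i = ε).card * (f (x + dirVec d ε) - f x) := by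
    rw [rotorIncrement, ← Finset.sum_fiberwise (Finset.range m) (r x)]
    refine Finset.sum_congr rfl fun ε _ => ?_
    rw [← nsmul_eq_mul, ← Finset.sum_const]
    exact Finset.sum_congr rfl fun i hi => by rw [(Finset.mem_filter.1 hi).2]
  have hlap : m * lap d f x = ∑ ε : Dir d, m / (2 * d) * (f (x + dirVec d ε) - f x) := by
    rw [lap_apply, ← Finset.mul_sum]
    ring
  rw [hsum, hlap, ← Finset.sum_sub_distrib, gradNorm, Finset.mul_sum]
  refine (Finset.abs_sum_le_sum_abs _ _).trans (Finset.sum_le_sum fun ε _ => ?_)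
  rw [← sub_mul, abs_mul]
  exact mul_le_mul_of_nonneg_right (hr.abs_card_sub_le x ε m) (abs_nonneg _)

lemma sum_rotorIncrement_rstep {S : Finset (Site d)} {s : Site d × (Site d → ℕ)} (hs : s.1 ∈ S)
    (f : Site d → ℝ) :
    ∑ x ∈ S, rotorIncrement r f x ((rstep r s).2 x)
      = ∑ x ∈ S, rotorIncrement r f x (s.2 x) + (f (rstep r s).1 - f s.1) := by
  have hterm (x : Site d) : rotorIncrement r f x ((rstep r s).2 x)
      = rotorIncrement r f x (s.2 x) + if x = s.1 then f (rstep r s).1 - f s.1 else 0 := by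
    rcases eq_or_ne x s.1 with rfl | hx
    · simp only [rstep, rotorIncrement, Function.update_self, Finset.sum_range_succ, if_true]
    · simp [rstep, hx]
  simp only [hterm, Finset.sum_add_distrib, Finset.sum_ite_eq', if_pos hs]

lemma walkState_succ (r : Site d → ℕ → Dir d) (c : Site d → ℕ) (t : ℕ) :
    walkState r c (t + 1) = rstep r (walkState r c t) :=
  Function.iterate_succ_apply' _ _ _

lemma sum_rotorIncrement_walkState {S : Finset (Site d)} {c : Site d → ℕ} {t : ℕ}
    (hS : ∀ s < t, (walkState r c s).1 ∈ S) (f : Site d → ℝ) :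
    ∑ x ∈ S, rotorIncrement r f x ((walkState r c t).2 x)
      = ∑ x ∈ S, rotorIncrement r f x (c x) + (f (walkState r c t).1 - f 0) := by
  induction t with
  | zero => simp [walkState]
  | succ t ih =>
    rw [walkState_succ, sum_rotorIncrement_rstep (hS t t.lt_succ_self),
      ih fun s hs => hS s (hs.trans t.lt_succ_self)]
    ring

lemma walkState_snd_of_notMem {S : Set (Site d)} {c : Site d → ℕ} {t : ℕ}
    (hS : ∀ s < t, (walkState r c s).1 ∈ S) {x : Site d} (hx : x ∉ S) :
    (walkState r c t).2 x = c x := by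
  induction t with
  | zero => rfl
  | succ t ih =>
    have hne : x ≠ (walkState r c t).1 := fun h => hx (h ▸ hS t t.lt_succ_self)
    rw [walkState_succ]
    exact (Function.update_of_ne hne _ _).trans (ih fun s hs => hS s (hs.trans t.lt_succ_self))

lemma abs_dirVec_le_one (ε : Dir d) (i : Fin d) : |dirVec d ε i| ≤ 1 := by
  unfold dirVec unitVec
  split_ifs <;> simp <;> split_ifs <;> simp

lemma abs_walkState_fst_le {c : Site d → ℕ} {t : ℕ} {i : Fin d} {R : ℤ} (hR : 0 ≤ R)
    (hlt : ∀ s < t, |(walkState r c s).1 i| ≤ R) :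
    |(walkState r c t).1 i| ≤ R + 1 := by
  cases t with
  | zero => simpa [walkState] using by positivity
  | succ t =>
    rw [walkState_succ]
    exact (abs_add_le _ _).trans (add_le_add (hlt t t.lt_succ_self) (abs_dirVec_le_one _ i))

lemma walkState_fst_mem_of_lt_exitSteps {A : Set (Site d)} {c : Site d → ℕ} {s : ℕ}
    (hs : s < exitSteps r A c) : (walkState r c s).1 ∈ A :=
  not_not.1 (Nat.notMem_of_lt_sInf hs)

/- If the walk never left `A`, then `exitSteps` would be `sInf ∅ = 0`; allowing for this value is
easier than excluding it. -/
lemma exitSteps_eq_zero_of_mem {A : Set (Site d)} {c : Site d → ℕ}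
    (hA : (walkState r c (exitSteps r A c)).1 ∈ A) : exitSteps r A c = 0 := by
  have hempty : {t | (walkState r c t).1 ∉ A} = ∅ :=
    Set.not_nonempty_iff_eq_empty.1 fun hne => Nat.sInf_mem hne hA
  rw [exitSteps, hempty, Nat.sInf_empty]

end RotorWalk

section Aggregation

variable {d : ℕ} {r : Site d → ℕ → Dir d} {n : ℕ}

/-- The number of steps of the `(n + 1)`-st walk of the aggregation, which settles a particle at the
site `y_{n+1}`. -/
def settleSteps (r : Site d → ℕ → Dir d) (n : ℕ) : ℕ :=
  exitSteps r (aggState r n).1 (aggState r n).2.1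

/-- The site `y_{n+1}` and the visit counts after the `(n + 1)`-st walk of the aggregation. -/
def settleState (r : Site d → ℕ → Dir d) (n : ℕ) : Site d × (Site d → ℕ) :=
  walkState r (aggState r n).2.1 (settleSteps r n)

lemma aggState_succ (r : Site d → ℕ → Dir d) (n : ℕ) :
    aggState r (n + 1) = (insert (settleState r n).1 (aggState r n).1, (settleState r n).2,
      (aggState r n).2.2 + settleSteps r n) := rfl

lemma walkState_fst_mem_of_lt_settleSteps {s : ℕ} (hs : s < settleSteps r n) :
    (walkState r (aggState r n).2.1 s).1 ∈ (aggState r n).1 :=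
  walkState_fst_mem_of_lt_exitSteps hs

lemma settleState_eq_of_mem (h : (settleState r n).1 ∈ (aggState r n).1) :
    settleState r n = (0, (aggState r n).2.1) := by
  rw [settleState, show settleSteps r n = 0 from exitSteps_eq_zero_of_mem h]
  rfl

lemma finite_aggState (r : Site d → ℕ → Dir d) (n : ℕ) : (aggState r n).1.Finite := by
  induction n with
  | zero => exact Set.finite_singleton 0
  | succ n ih => exact ih.insert _

lemma ncard_aggState_le (r : Site d → ℕ → Dir d) (n : ℕ) : (aggState r n).1.ncard ≤ n + 1 := by
  induction n with
  | zero => exact (Set.ncard_singleton (0 : Site d)).le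
  | succ n ih => exact (Set.ncard_insert_le _ _).trans (Nat.succ_le_succ ih)

lemma abs_le_of_mem_aggState {x : Site d} (hx : x ∈ (aggState r n).1) (i : Fin d) : |x i| ≤ n := by
  induction n generalizing x with
  | zero => simp [Set.mem_singleton_iff.1 hx]
  | succ n ih =>
    push_cast
    rcases hx with rfl | hx
    · exact abs_walkState_fst_le n.cast_nonneg
        fun s hs => ih (walkState_fst_mem_of_lt_settleSteps hs)
    · exact (ih hx).trans (le_add_of_nonneg_right zero_le_one)

lemma aggState_snd_of_notMem {x : Site d} (hx : x ∉ (aggState r n).1) :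
    (aggState r n).2.1 x = 0 := by
  induction n with
  | zero => rfl
  | succ n ih =>
    have hx' : x ∉ (aggState r n).1 := fun h => hx (Set.mem_insert_of_mem _ h)
    exact (walkState_snd_of_notMem (fun s hs => walkState_fst_mem_of_lt_settleSteps hs) hx').trans
      (ih hx')

lemma sum_sub_eq_sum_rotorIncrement (f : Site d → ℝ) {A : Finset (Site d)}
    (hA : (A : Set (Site d)) = (aggState r n).1) :
    ∑ x ∈ A, (f x - f 0) = ∑ x ∈ A, rotorIncrement r f x ((aggState r n).2.1 x) := by
  induction n generalizing A with
  | zero =>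
    have : A = {0} := by
      rw [← Finset.coe_inj, hA, Finset.coe_singleton]
      rfl
    simp [this, aggState, rotorIncrement]
  | succ n ih =>
    obtain ⟨B, hB⟩ := (finite_aggState r n).exists_finset_coe
    have hins : A = insert (settleState r n).1 B := by
      rw [← Finset.coe_inj, hA, Finset.coe_insert, hB]
      rfl
    simp only [aggState_succ]
    by_cases hmem : (settleState r n).1 ∈ (aggState r n).1
    · rw [hins, Finset.insert_eq_of_mem (Finset.mem_coe.1 (hB ▸ hmem)), ih hB,
        settleState_eq_of_mem hmem]
    · have hwalk (s) (hs : s < settleSteps r n) : (walkState r (aggState r n).2.1 s).1 ∈ B :=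
        Finset.mem_coe.1 (hB ▸ walkState_fst_mem_of_lt_settleSteps hs)
      have hfresh : (settleState r n).2 (settleState r n).1 = 0 :=
        (walkState_snd_of_notMem (fun s hs => walkState_fst_mem_of_lt_settleSteps hs) hmem).trans
          (aggState_snd_of_notMem hmem)
      have hmemB : (settleState r n).1 ∉ B := fun h => hmem (hB ▸ Finset.mem_coe.2 h)
      have hmove : ∑ x ∈ B, rotorIncrement r f x ((settleState r n).2 x)
          = ∑ x ∈ B, rotorIncrement r f x ((aggState r n).2.1 x) + (f (settleState r n).1 - f 0) :=
        sum_rotorIncrement_walkState hwalk f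
      rw [hins, Finset.sum_insert hmemB, Finset.sum_insert hmemB, hfresh, rotorIncrement_zero,
        ih hB, hmove, zero_add, add_comm]

end Aggregation

section SquaredNorm

variable {d : ℕ}

lemma nsq_add_dirVec_sub (x : Site d) (ε : Dir d) :
    nsq (x + dirVec d ε) - nsq x = 2 * (if ε.2 then (x ε.1 : ℝ) else -x ε.1) + 1 := by
  rw [nsq, nsq, ← Finset.sum_sub_distrib, Finset.sum_eq_single ε.1]
  · unfold dirVec unitVec
    split_ifs <;> simp <;> ring
  · intro j _ hj
    unfold dirVec unitVec
    split_ifs <;> simp [hj]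
  · simp

lemma lap_nsq [NeZero d] (x : Site d) : lap d nsq x = 1 := by
  have hd : (d : ℝ) ≠ 0 := NeZero.ne _
  simp only [lap_apply, nsq_add_dirVec_sub, Fintype.sum_prod_type, Fintype.sum_bool, if_true,
    Bool.false_eq_true, if_false]
  ring_nf
  simp [hd]

lemma abs_le_enorm (x : Site d) (i : Fin d) : |(x i : ℝ)| ≤ enorm x :=
  Real.abs_le_sqrt <|
    Finset.single_le_sum (f := fun j => (x j : ℝ) ^ 2) (fun _ _ => sq_nonneg _) (Finset.mem_univ i)

lemma gradNorm_nsq_le (x : Site d) : gradNorm nsq x ≤ 4 * d * enorm x + 2 * d := by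
  have hterm (ε : Dir d) : |nsq (x + dirVec d ε) - nsq x| ≤ 2 * enorm x + 1 := by
    rw [nsq_add_dirVec_sub]
    refine (abs_add_le _ _).trans ?_
    rw [abs_mul, abs_two, abs_one]
    gcongr
    split_ifs
    · exact abs_le_enorm x _
    · exact (abs_neg _).trans_le (abs_le_enorm x _)
  calc gradNorm nsq x ≤ (Finset.univ : Finset (Dir d)).card • (2 * enorm x + 1) :=
        Finset.sum_le_card_nsmul _ _ _ fun ε _ => hterm ε
    _ = 4 * d * enorm x + 2 * d := by
        simp only [Finset.card_univ, Fintype.card_prod, Fintype.card_fin, Fintype.card_bool,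
          nsmul_eq_mul]
        push_cast
        ring

/- `nsq + exitFun d A` is harmonic on `A`, so that only the rotor discrepancy contributes to its
total increment. -/
lemma HasDiscrepancy.sum_nsq_le [NeZero d] {D : ℝ} {r : Site d → ℕ → Dir d}
    (hr : HasDiscrepancy d D r) (hD : 0 ≤ D) {n : ℕ} {A : Finset (Site d)}
    (hA : (A : Set (Site d)) = (aggState r n).1) :
    ∑ x ∈ A, nsq x ≤ ∑ x ∈ A, (exitFun d A 0 - exitFun d A x)
      + D * (4 * d * ∑ x ∈ A, enorm x + 2 * d * A.card + ∑ x ∈ A, gradNorm (exitFun d A) x) := by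
  set e := exitFun d A
  set g : Site d → ℝ := nsq + e with hg
  have hharmonic (x) (hx : x ∈ A) : lap d g x = 0 := by
    rw [hg, map_add, Pi.add_apply, lap_nsq, lap_exitFun hx, add_neg_cancel]
  have hincrement (x) (hx : x ∈ A) : rotorIncrement r g x ((aggState r n).2.1 x)
      ≤ D * (4 * d * enorm x + 2 * d + gradNorm e x) := by
    have hdisc := hr.abs_rotorIncrement_sub_le g x ((aggState r n).2.1 x)
    rw [hharmonic x hx, mul_zero, sub_zero] at hdisc
    refine ((le_abs_self _).trans hdisc).trans ?_
    gcongr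
    exact (gradNorm_add_le _ _ x).trans (add_le_add_left (gradNorm_nsq_le x) _)
  have hnsq_zero : nsq (0 : Site d) = 0 := by simp [nsq]
  calc ∑ x ∈ A, nsq x
      = ∑ x ∈ A, (e 0 - e x) + ∑ x ∈ A, (g x - g 0) := by
        rw [← Finset.sum_add_distrib]
        refine Finset.sum_congr rfl fun x _ => ?_
        simp only [hg, Pi.add_apply, hnsq_zero]
        ring
    _ ≤ ∑ x ∈ A, (e 0 - e x) + ∑ x ∈ A, D * (4 * d * enorm x + 2 * d + gradNorm e x) := by
        rw [sum_sub_eq_sum_rotorIncrement _ hA]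
        gcongr with x hx
        exact hincrement x hx
    _ = _ := by
        simp only [← Finset.mul_sum, Finset.sum_add_distrib, Finset.sum_const, nsmul_eq_mul]
        ring

end SquaredNorm

section RankSum

variable {ι α M : Type*} [LinearOrder α] [AddCommMonoid M] [PartialOrder M] [IsOrderedAddMonoid M]

lemma sum_le_sum_Icc_of_rank (h : ι → α) {s : Finset ι} {g : ι → M} {m : ℕ → M}
    (H : ∀ x ∈ s, ∀ j, (s.filter fun y => h y < h x).card ≤ j → g x ≤ m j) :
    ∑ x ∈ s, g x ≤ ∑ j ∈ Finset.Icc 1 s.card, m j := by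
  induction s using Finset.induction_on_max_value h with
  | empty => simp
  | insert a s ha hmax ih =>
    rw [Finset.sum_insert ha, Finset.card_insert_of_notMem ha,
      Finset.sum_Icc_succ_top (Nat.le_add_left _ _), add_comm]
    refine add_le_add (ih fun x hx j hj => H x (Finset.mem_insert_of_mem hx) j ?_)
      (H a (Finset.mem_insert_self _ _) _ ?_)
    · rwa [Finset.filter_insert, if_neg (hmax x hx).not_gt]
    · exact (Finset.card_filter_le _ _).trans (Finset.card_insert_le _ _)

lemma sum_Icc_le_sum_of_rank (h : ι → α) {s : Finset ι} {g : ι → M} {m : ℕ → M}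
    (H : ∀ x ∈ s, ∀ j ≤ (s.filter fun y => h y ≤ h x).card, m j ≤ g x) :
    ∑ j ∈ Finset.Icc 1 s.card, m j ≤ ∑ x ∈ s, g x := by
  induction s using Finset.induction_on_max_value h with
  | empty => simp
  | insert a s ha hmax ih =>
    rw [Finset.sum_insert ha, Finset.card_insert_of_notMem ha,
      Finset.sum_Icc_succ_top (Nat.le_add_left _ _), add_comm (g a)]
    refine add_le_add (ih fun x hx j hj => H x (Finset.mem_insert_of_mem hx) j ?_)
      (H a (Finset.mem_insert_self _ _) _ ?_)
    · exact hj.trans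
        (Finset.card_le_card (Finset.filter_subset_filter _ (Finset.subset_insert _ _)))
    · have hall : ∀ y ∈ insert a s, h y ≤ h a :=
        (Finset.forall_mem_insert _ _ _).2 ⟨le_rfl, hmax⟩
      rw [Finset.filter_true_of_mem hall, Finset.card_insert_of_notMem ha]

end RankSum

section Counting

variable {d : ℕ}

lemma enorm_nonneg (x : Site d) : 0 ≤ enorm x := Real.sqrt_nonneg _

lemma enorm_sq (x : Site d) : enorm x ^ 2 = nsq x :=
  Real.sq_sqrt (Finset.sum_nonneg fun _ _ => sq_nonneg _)

/-- The inclusion of `ℤ^d` into Euclidean space. -/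
def toEuclidean (x : Site d) : EuclideanSpace ℝ (Fin d) := WithLp.toLp 2 fun i => (x i : ℝ)

lemma norm_toEuclidean (x : Site d) : ‖toEuclidean x‖ = enorm x := by
  simp [EuclideanSpace.norm_eq, enorm, nsq, toEuclidean]

/-- The half-open unit cube with lowest corner `x`, used to compare lattice point counts with
volumes. -/
def cell (x : Site d) : Set (EuclideanSpace ℝ (Fin d)) := {z | ∀ i, ⌊z i⌋ = x i}

lemma cell_eq_preimage (x : Site d) : cell x = (WithLp.ofLp (p := 2)) ⁻¹'
    (Set.pi Set.univ fun i => Set.Ico (x i : ℝ) (x i + 1)) := by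
  ext z
  simp [cell, Int.floor_eq_iff]

lemma measurableSet_cell (x : Site d) : MeasurableSet (cell x) := by
  rw [cell_eq_preimage]
  exact (PiLp.volume_preserving_ofLp (Fin d)).measurable
    (MeasurableSet.univ_pi fun i => measurableSet_Ico)

lemma volume_cell (x : Site d) : volume (cell x) = 1 := by
  rw [cell_eq_preimage, (PiLp.volume_preserving_ofLp (Fin d)).measure_preimage
    (MeasurableSet.univ_pi fun i => measurableSet_Ico).nullMeasurableSet, Real.volume_pi_Ico]
  simp

lemma norm_sub_toEuclidean_le {x : Site d} {z : EuclideanSpace ℝ (Fin d)} (hz : z ∈ cell x) :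
    ‖z - toEuclidean x‖ ≤ √d := by
  have hcoord (i : Fin d) : ‖(z - toEuclidean x) i‖ ^ 2 ≤ 1 := by
    have hi := Int.floor_eq_iff.1 (hz i)
    simp only [toEuclidean, PiLp.sub_apply, Real.norm_eq_abs]
    exact pow_le_one₀ (abs_nonneg _) (abs_le.2 ⟨by linarith, by linarith⟩)
  rw [EuclideanSpace.norm_eq]
  exact Real.sqrt_le_sqrt ((Finset.sum_le_sum fun i _ => hcoord i).trans (by simp))

lemma volume_real_biUnion_cell (S : Finset (Site d)) :
    volume.real (⋃ x ∈ S, cell x) = S.card := by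
  have hdisj : (S : Set (Site d)).PairwiseDisjoint cell := fun x _ y _ hxy =>
    Set.disjoint_left.2 fun z hzx hzy => hxy (funext fun i => (hzx i).symm.trans (hzy i))
  rw [measureReal_def, measure_biUnion_finset hdisj fun x _ => measurableSet_cell x]
  simp [volume_cell]

lemma ballVol_pos (d : ℕ) : 0 < ballVol d :=
  ENNReal.toReal_pos (Metric.measure_ball_pos _ _ one_pos).ne' measure_ball_lt_top.ne

lemma card_le_ballVol_mul {S : Finset (Site d)} {R : ℝ} (hR : 0 ≤ R)
    (hS : ∀ x ∈ S, enorm x ≤ R) : (S.card : ℝ) ≤ ballVol d * (R + √d) ^ d := by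
  have hsub : (⋃ x ∈ S, cell x) ⊆ Metric.closedBall 0 (R + √d) := by
    refine Set.iUnion₂_subset fun x hx z hz => mem_closedBall_zero_iff.2 ?_
    calc ‖z‖ ≤ ‖toEuclidean x‖ + ‖z - toEuclidean x‖ := norm_le_insert' _ _
      _ ≤ R + √d := add_le_add ((norm_toEuclidean x).trans_le (hS x hx))
          (norm_sub_toEuclidean_le hz)
  calc (S.card : ℝ) = volume.real (⋃ x ∈ S, cell x) := (volume_real_biUnion_cell S).symm
    _ ≤ volume.real (Metric.closedBall (0 : EuclideanSpace ℝ (Fin d)) (R + √d)) :=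
        measureReal_mono hsub measure_closedBall_lt_top.ne
    _ = ballVol d * (R + √d) ^ d := by
        rw [Measure.addHaar_real_closedBall _ _ (by positivity), finrank_euclideanSpace_fin,
          mul_comm, ballVol, measureReal_def]

lemma ballVol_mul_le_card [NeZero d] {S : Finset (Site d)} {R : ℝ} (hR : √d ≤ R)
    (hS : ∀ x, enorm x < R → x ∈ S) : ballVol d * (R - √d) ^ d ≤ S.card := by
  have hsub : Metric.ball 0 (R - √d) ⊆ ⋃ x ∈ S, cell x := by
    intro z hz
    have hfloor : z ∈ cell fun i => ⌊z i⌋ := fun i => rfl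
    refine Set.mem_biUnion (Finset.mem_coe.2 (hS _ ?_)) hfloor
    have hnorm := mem_ball_zero_iff.1 hz
    calc enorm _ = ‖toEuclidean fun i => ⌊z i⌋‖ := (norm_toEuclidean _).symm
      _ ≤ ‖z‖ + ‖z - toEuclidean fun i => ⌊z i⌋‖ := norm_le_insert _ _
      _ < R := by linarith [norm_sub_toEuclidean_le hfloor]
  have hfin : volume (⋃ x ∈ S, cell x) ≠ ⊤ :=
    (measure_biUnion_lt_top S.finite_toSet fun x _ => by simp [volume_cell]).ne
  calc ballVol d * (R - √d) ^ d
      = volume.real (Metric.ball (0 : EuclideanSpace ℝ (Fin d)) (R - √d)) := by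
        rw [measureReal_def, Measure.addHaar_ball _ _ (sub_nonneg.2 hR), ENNReal.toReal_mul,
          ENNReal.toReal_ofReal (pow_nonneg (sub_nonneg.2 hR) _), finrank_euclideanSpace_fin,
          mul_comm, ballVol]
    _ ≤ volume.real (⋃ x ∈ S, cell x) := measureReal_mono hsub hfin
    _ = S.card := volume_real_biUnion_cell S

end Counting

section LatticeBall

variable {d : ℕ}

/-- The radius of the Euclidean ball of volume `n`, so that `B_n = {x : ‖x‖ < ballRadius d n}`. -/
def ballRadius (d n : ℕ) : ℝ := (n / ballVol d) ^ (1 / (d : ℝ))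

lemma ballRadius_nonneg (d n : ℕ) : 0 ≤ ballRadius d n :=
  Real.rpow_nonneg (div_nonneg n.cast_nonneg (ballVol_pos d).le) _

lemma ballRadius_mono {m n : ℕ} (h : m ≤ n) : ballRadius d m ≤ ballRadius d n := by
  have hvol := ballVol_pos d
  unfold ballRadius
  gcongr

lemma ballRadius_eq_mul_rpow (d n : ℕ) :
    ballRadius d n = ballRadius d 1 * (n : ℝ) ^ (1 / (d : ℝ)) := by
  have hvol := ballVol_pos d
  rw [ballRadius, ballRadius, ← Real.mul_rpow (by positivity) n.cast_nonneg]
  congr 1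
  push_cast
  ring

lemma ballVol_mul_ballRadius_pow [NeZero d] (n : ℕ) : ballVol d * ballRadius d n ^ d = n := by
  have hvol := ballVol_pos d
  rw [ballRadius, one_div, Real.rpow_inv_natCast_pow (by positivity) (NeZero.ne d),
    mul_div_cancel₀ _ hvol.ne']

lemma ballRadius_le [NeZero d] {n : ℕ} {R : ℝ} (hR : 0 ≤ R) (h : (n : ℝ) ≤ ballVol d * R ^ d) :
    ballRadius d n ≤ R := by
  rw [← ballVol_mul_ballRadius_pow (d := d)] at h
  exact le_of_pow_le_pow_left₀ (NeZero.ne d) hR (le_of_mul_le_mul_left h (ballVol_pos d))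

lemma mem_lball [NeZero d] {n : ℕ} {x : Site d} : x ∈ lball d n ↔ enorm x < ballRadius d n := by
  rw [lball, Set.mem_ofPred_eq, ← ballVol_mul_ballRadius_pow (d := d) n,
    mul_lt_mul_iff_right₀ (ballVol_pos d),
    pow_lt_pow_iff_left₀ (enorm_nonneg x) (ballRadius_nonneg d n) (NeZero.ne d)]

lemma finite_setOf_enorm_le (R : ℝ) : {x : Site d | enorm x ≤ R}.Finite := by
  refine (Set.finite_Icc (fun _ : Fin d => -⌈R⌉) fun _ => ⌈R⌉).subset fun x hx => ?_
  have hcoord (i : Fin d) : |x i| ≤ ⌈R⌉ := by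
    have h : ((|x i| : ℤ) : ℝ) ≤ ⌈R⌉ := by
      rw [Int.cast_abs]
      exact ((abs_le_enorm x i).trans hx).trans (Int.le_ceil R)
    exact_mod_cast h
  exact ⟨fun i => (abs_le.1 (hcoord i)).1, fun i => (abs_le.1 (hcoord i)).2⟩

lemma finite_lball [NeZero d] (n : ℕ) : (lball d n).Finite :=
  (finite_setOf_enorm_le (ballRadius d n)).subset fun _ hx => (mem_lball.1 hx).le

lemma nsq_add_dirVec_le (x : Site d) (ε : Dir d) : nsq (x + dirVec d ε) ≤ (enorm x + 1) ^ 2 := by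
  have hstep := nsq_add_dirVec_sub x ε
  have hcoord := abs_le.1 (abs_le_enorm x ε.1)
  have hsq := enorm_sq x
  split_ifs at hstep <;> linarith

/- The function `(R + 1) ^ 2 - ‖x‖ ^ 2` has Laplacian `-1` and is nonnegative within distance one
of the ball of radius `R`. -/
lemma exitFun_le_of_enorm_le [NeZero d] {A : Finset (Site d)} {R : ℝ}
    (hA : ∀ x ∈ A, enorm x ≤ R) {x : Site d} (hx : x ∈ A) :
    exitFun d A x ≤ (R + 1) ^ 2 - nsq x := by
  refine le_of_lap_le (g := (fun _ => (R + 1) ^ 2) - nsq) (fun y hy => ?_) (fun y hy ε hε => ?_) hx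
  · simp [lap_exitFun hy, lap_const, lap_nsq]
  · rw [exitFun_of_notMem hε, Pi.sub_apply, sub_nonneg]
    have hR : (enorm y + 1) ^ 2 ≤ (R + 1) ^ 2 :=
      pow_le_pow_left₀ (by linarith [enorm_nonneg y]) (by linarith [hA y hy]) 2
    exact (nsq_add_dirVec_le y ε).trans hR

lemma exitFun_lball_zero_le [NeZero d] (n : ℕ) :
    exitFun d (lball d n) 0 ≤ (ballRadius d n + 1) ^ 2 := by
  obtain ⟨B, hB⟩ := (finite_lball (d := d) n).exists_finset_coe
  rw [← hB]
  by_cases h0 : (0 : Site d) ∈ B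
  · refine (exitFun_le_of_enorm_le (R := ballRadius d n) (fun x hx => ?_) h0).trans ?_
    · exact (mem_lball.1 (hB ▸ Finset.mem_coe.2 hx)).le
    · simp [nsq]
  · rw [exitFun_of_notMem h0]
    positivity

lemma sum_Icc_sq_le_sum_nsq [NeZero d] (S : Finset (Site d)) :
    ∑ j ∈ Finset.Icc 1 S.card, (max (ballRadius d j - √d) 0) ^ 2 ≤ ∑ x ∈ S, nsq x := by
  refine sum_Icc_le_sum_of_rank enorm fun x _ j hj => ?_
  have hcount : (j : ℝ) ≤ ballVol d * (enorm x + √d) ^ d :=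
    (Nat.cast_le.2 hj).trans
      (card_le_ballVol_mul (enorm_nonneg x) fun y hy => (Finset.mem_filter.1 hy).2)
  have hradius := ballRadius_le (add_nonneg (enorm_nonneg x) (Real.sqrt_nonneg d)) hcount
  rw [← enorm_sq]
  exact pow_le_pow_left₀ (le_max_right _ _) (max_le (by linarith) (enorm_nonneg x)) 2

/- If `ballRadius d n` is at least `√d`, then Bernoulli's inequality bounds the volume
`ballVol d * (ballRadius d n - √d) ^ d` from below. -/
lemma sub_card_mul_ballRadius_le [NeZero d] {n : ℕ} {B : Finset (Site d)}
    (hB : (B : Set (Site d)) = lball d n) :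
    (n - B.card) * ballRadius d n ≤ d * √d * n := by
  have hd : (1 : ℝ) ≤ d := Nat.one_le_cast.2 NeZero.one_le
  rcases le_or_gt (√d) (ballRadius d n) with hr | hr
  · set s := ballRadius d n
    have hs : 0 < s := (Real.sqrt_pos.2 (by linarith)).trans_le hr
    have hcount : ballVol d * (s - √d) ^ d ≤ B.card :=
      ballVol_mul_le_card hr fun x hx => Finset.mem_coe.1 (hB ▸ mem_lball.2 hx)
    have hbernoulli : 1 + d * (-(√d / s)) ≤ (1 + -(√d / s)) ^ d :=
      one_add_mul_le_pow (by linarith [(div_le_one hs).2 hr]) d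
    have hpow : ballVol d * (s - √d) ^ d = n * (1 + -(√d / s)) ^ d := by
      rw [← ballVol_mul_ballRadius_pow (d := d) n, mul_assoc, ← mul_pow]
      congr 2
      field_simp
      ring
    calc (n - B.card) * s ≤ (n - n * (1 + d * (-(√d / s)))) * s := by
          gcongr
          exact (mul_le_mul_of_nonneg_left hbernoulli n.cast_nonneg).trans (hpow ▸ hcount)
      _ = d * √d * n := by
          field_simp
          ring
  · calc (n - B.card) * ballRadius d n ≤ n * √d := by
          have := ballRadius_nonneg d n
          gcongr
          simp
      _ ≤ d * √d * n := by
          nlinarith [mul_nonneg n.cast_nonneg (Real.sqrt_nonneg d)]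

lemma sum_Icc_sq_le_psi_lball_add [NeZero d] (n : ℕ) :
    ∑ j ∈ Finset.Icc 1 n, (max (ballRadius d j - √d) 0) ^ 2
      ≤ psi (lball d n) + d * √d * n * ballRadius d n := by
  obtain ⟨B, hB⟩ := (finite_lball (d := d) n).exists_finset_coe
  have hr := ballRadius_nonneg d n
  set ρ : ℕ → ℝ := fun j => (max (ballRadius d j - √d) 0) ^ 2
  have hrank : ∑ j ∈ Finset.Icc 1 B.card, ρ j ≤ psi (lball d n) := by
    rw [psi, ← hB, finsum_mem_coe_finset]
    exact sum_Icc_sq_le_sum_nsq B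
  rcases le_total n B.card with hn | hn
  · have herr : 0 ≤ d * √d * n * ballRadius d n := by positivity
    have hmono : ∑ j ∈ Finset.Icc 1 n, ρ j ≤ ∑ j ∈ Finset.Icc 1 B.card, ρ j :=
      Finset.sum_le_sum_of_subset_of_nonneg (Finset.Icc_subset_Icc_right hn)
        fun j _ _ => sq_nonneg _
    linarith
  · have hterm (j) (hj : j ∈ Finset.Ioc B.card n) : ρ j ≤ ballRadius d n ^ 2 :=
      pow_le_pow_left₀ (le_max_right _ _)
        (max_le (by linarith [ballRadius_mono (d := d) (Finset.mem_Ioc.1 hj).2,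
          Real.sqrt_nonneg d]) hr) 2
    have htail : ∑ j ∈ Finset.Ioc B.card n, ρ j ≤ d * √d * n * ballRadius d n :=
      calc ∑ j ∈ Finset.Ioc B.card n, ρ j ≤ (n - B.card) * ballRadius d n ^ 2 := by
            simpa [Nat.cast_sub hn] using Finset.sum_le_card_nsmul _ _ _ hterm
        _ = (n - B.card) * ballRadius d n * ballRadius d n := by ring
        _ ≤ d * √d * n * ballRadius d n :=
            mul_le_mul_of_nonneg_right (sub_card_mul_ballRadius_le hB) hr
    have hsplit : ∑ j ∈ Finset.Icc 1 n, ρ j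
        = ∑ j ∈ Finset.Icc 1 B.card, ρ j + ∑ j ∈ Finset.Ioc B.card n, ρ j :=
      (Finset.sum_Ioc_consecutive ρ (Nat.zero_le _) hn).symm
    linarith

lemma exitFun_lball_zero_le_sq_add [NeZero d] (n : ℕ) :
    exitFun d (lball d n) 0
      ≤ (max (ballRadius d n - √d) 0) ^ 2 + ((2 * √d + 2) * ballRadius d n + 1) := by
  have hr := ballRadius_nonneg d n
  have hsq : ballRadius d n ^ 2 - 2 * √d * ballRadius d n ≤ (max (ballRadius d n - √d) 0) ^ 2 := by
    rcases le_total (√d) (ballRadius d n) with h | h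
    · rw [max_eq_left (sub_nonneg.2 h)]
      nlinarith [sq_nonneg (√d)]
    · rw [max_eq_right (sub_nonpos.2 h)]
      nlinarith
  linarith [exitFun_lball_zero_le (d := d) n]

lemma sum_exitFun_lball_zero_le [NeZero d] (n : ℕ) :
    ∑ j ∈ Finset.Icc 1 n, exitFun d (lball d j) 0
      ≤ psi (lball d n) + n * ((d * √d + 2 * √d + 2) * ballRadius d n + 1) := by
  have hterm (j) (hj : j ∈ Finset.Icc 1 n) : exitFun d (lball d j) 0
      ≤ (max (ballRadius d j - √d) 0) ^ 2 + ((2 * √d + 2) * ballRadius d n + 1) := by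
    refine (exitFun_lball_zero_le_sq_add j).trans ?_
    gcongr
    exact ballRadius_mono (Finset.mem_Icc.1 hj).2
  calc ∑ j ∈ Finset.Icc 1 n, exitFun d (lball d j) 0
      ≤ ∑ j ∈ Finset.Icc 1 n, (max (ballRadius d j - √d) 0) ^ 2
          + n * ((2 * √d + 2) * ballRadius d n + 1) := by
        refine (Finset.sum_le_sum hterm).trans_eq ?_
        rw [Finset.sum_add_distrib, Finset.sum_const, Nat.card_Icc, Nat.add_sub_cancel,
          nsmul_eq_mul]
    _ ≤ psi (lball d n) + d * √d * n * ballRadius d n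
          + n * ((2 * √d + 2) * ballRadius d n + 1) :=
        add_le_add_left (sum_Icc_sq_le_psi_lball_add n) _
    _ = _ := by ring

end LatticeBall

section Layering

variable {d : ℕ} [NeZero d]

lemma bddAbove_ebar_sub (n : ℕ) :
    BddAbove {t | ∃ A : Set (Site d), A.Finite ∧ A.ncard = n ∧
      t = ebar d A - exitFun d (lball d n) 0} := by
  refine ⟨48 * 2 ^ d * d ^ 3 * (n : ℝ) ^ 2 - exitFun d (lball d n) 0, ?_⟩
  rintro t ⟨A, hA, hcard, rfl⟩
  obtain ⟨S, rfl⟩ := hA.exists_finset_coe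
  rw [Set.ncard_coe_finset] at hcard
  refine sub_le_sub_right (ebar_le S n.cast_nonneg ?_) _
  rw [hcard]
  exact_mod_cast Nat.le_self_pow (NeZero.ne d) n

lemma ebar_le_phi_add {A : Finset (Site d)} {n : ℕ} (hA : A.card ≤ n) :
    ebar d A ≤ phi d n + exitFun d (lball d n) 0 := by
  obtain ⟨B, hAB, hB⟩ := Infinite.exists_superset_card_eq A n hA
  have hphi : ebar d B - exitFun d (lball d n) 0 ≤ phi d n :=
    le_csSup (bddAbove_ebar_sub n) ⟨B, B.finite_toSet, by rw [Set.ncard_coe_finset, hB], rfl⟩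
  linarith [ebar_mono hAB]

lemma phi_add_exitFun_nonneg (n : ℕ) : 0 ≤ phi d n + exitFun d (lball d n) 0 :=
  (ebar_nonneg ∅).trans (ebar_le_phi_add n.zero_le)

/- If `j` sites of `A` have a larger exit time than `x`, then `ebar d A` exceeds `exitFun d A x` by
at most the largest exit time of a region with `j` sites. -/
lemma sum_exitFun_zero_sub_le {A : Finset (Site d)} {n : ℕ} (hA : A.card ≤ n) :
    ∑ x ∈ A, (exitFun d A 0 - exitFun d A x)
      ≤ ∑ j ∈ Finset.Icc 1 n, (phi d j + exitFun d (lball d j) 0) := by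
  have hrank (x) (_ : x ∈ A) (j : ℕ)
      (hj : (A.filter fun y => -exitFun d A y < -exitFun d A x).card ≤ j) :
      exitFun d A 0 - exitFun d A x ≤ phi d j + exitFun d (lball d j) 0 := by
    simp only [neg_lt_neg_iff] at hj
    linarith [exitFun_le_ebar A 0, ebar_le_add_ebar_filter A (exitFun_nonneg A x),
      ebar_le_phi_add hj]
  exact (sum_le_sum_Icc_of_rank (fun x => -exitFun d A x) hrank).trans
    (Finset.sum_le_sum_of_subset_of_nonneg (Finset.Icc_subset_Icc_right hA)
      fun j _ _ => phi_add_exitFun_nonneg j)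

lemma exists_sum_phi_add_exitFun_le (d : ℕ) [NeZero d] : ∃ C : ℝ, 0 ≤ C ∧ ∀ {n : ℕ}, 1 ≤ n →
    ∑ j ∈ Finset.Icc 1 n, (phi d j + exitFun d (lball d j) 0)
      ≤ psi (lball d n) + PhiSum d n + C * (n * (n : ℝ) ^ (1 / (d : ℝ))) := by
  set c : ℝ := d * √d + 2 * √d + 2
  have hc0 : 0 ≤ c := by positivity
  have hr := ballRadius_nonneg d 1
  refine ⟨c * ballRadius d 1 + 1, add_nonneg (mul_nonneg hc0 hr) zero_le_one, fun {n} hn => ?_⟩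
  have hq : 1 ≤ (n : ℝ) ^ (1 / (d : ℝ)) := Real.one_le_rpow (by exact_mod_cast hn) (by positivity)
  calc ∑ j ∈ Finset.Icc 1 n, (phi d j + exitFun d (lball d j) 0)
      ≤ psi (lball d n) + PhiSum d n + n * (c * ballRadius d n + 1) := by
        rw [Finset.sum_add_distrib, PhiSum]
        linarith [sum_exitFun_lball_zero_le (d := d) n]
    _ ≤ psi (lball d n) + PhiSum d n
          + n * (c * ballRadius d n + (n : ℝ) ^ (1 / (d : ℝ))) := by gcongr
    _ = _ := by
        rw [ballRadius_eq_mul_rpow]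
        ring

end Layering

section Assembly

lemma le_mul_add_of_sq_le {a b w α β γ : ℝ} (ha : 0 ≤ a) (hb : 0 ≤ b) (hα : 0 ≤ α) (hβ : 0 ≤ β)
    (hγ : 0 ≤ γ) (h : w ^ 2 ≤ α * a ^ 2 + β * b * w + γ * a * b) :
    w ≤ (1 + α + β + γ) * (a + b) := by
  rcases le_or_gt w (a + b) with hw | hw
  · exact hw.trans (le_mul_of_one_le_left (add_nonneg ha hb) (by linarith))
  · have hw0 : 0 < w := (add_nonneg ha hb).trans_lt hw
    have ha2 : a ^ 2 ≤ (a + b) * w := by nlinarith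
    have hbw : b * w ≤ (a + b) * w := by nlinarith
    have hab : a * b ≤ (a + b) * w := by nlinarith
    refine le_of_mul_le_mul_right ?_ hw0
    calc w * w ≤ α * a ^ 2 + β * (b * w) + γ * (a * b) := by linarith
      _ ≤ α * ((a + b) * w) + β * ((a + b) * w) + γ * ((a + b) * w) := by gcongr
      _ ≤ (1 + α + β + γ) * (a + b) * w := by nlinarith

lemma sq_min_le_rpow_mul_rpow {x y θ : ℝ} (hx : 0 < x) (hy : 0 < y) (hθ : 0 ≤ θ) (hθ2 : θ ≤ 2) :
    min x y ^ 2 ≤ x ^ (2 - θ) * y ^ θ := by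
  have hmin : 0 < min x y := lt_min hx hy
  calc min x y ^ 2 = min x y ^ (2 - θ) * min x y ^ θ := by
        rw [← Real.rpow_add hmin, sub_add_cancel, Real.rpow_two]
    _ ≤ x ^ (2 - θ) * y ^ θ := by
        gcongr
        · exact min_le_left x y
        · exact min_le_right x y

lemma sq_sum_enorm_le {d : ℕ} (A : Finset (Site d)) :
    (∑ x ∈ A, enorm x) ^ 2 ≤ A.card * ∑ x ∈ A, nsq x := by
  simpa only [enorm_sq] using sq_sum_le_card_mul_sum_sq (s := A) (f := enorm)

lemma sum_nsq_le_of_abs_le {d : ℕ} {A : Finset (Site d)} {n : ℕ} (hcard : A.card ≤ n)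
    (hA : ∀ x ∈ A, ∀ i, |x i| ≤ n) : ∑ x ∈ A, nsq x ≤ d * (n : ℝ) ^ 3 := by
  have hterm (x) (hx : x ∈ A) : nsq x ≤ d * (n : ℝ) ^ 2 := by
    have hcoord (i) : (x i : ℝ) ^ 2 ≤ (n : ℝ) ^ 2 :=
      sq_le_sq' (by exact_mod_cast (abs_le.1 (hA x hx i)).1)
        (by exact_mod_cast (abs_le.1 (hA x hx i)).2)
    exact (Finset.sum_le_sum fun i _ => hcoord i).trans (by simp)
  calc ∑ x ∈ A, nsq x ≤ A.card * (d * (n : ℝ) ^ 2) := by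
        simpa using Finset.sum_le_card_nsmul _ _ _ hterm
    _ ≤ n * (d * (n : ℝ) ^ 2) := by gcongr
    _ = d * (n : ℝ) ^ 3 := by ring

variable {d : ℕ} [NeZero d]

lemma sum_exitFun_zero_sub_le_card_mul (A : Finset (Site d)) {q : ℝ} (hq : 0 ≤ q)
    (hA : (A.card : ℝ) ≤ q ^ d) :
    ∑ x ∈ A, (exitFun d A 0 - exitFun d A x) ≤ A.card * (48 * 2 ^ d * d ^ 3 * q ^ 2) := by
  rw [← nsmul_eq_mul]
  refine Finset.sum_le_card_nsmul _ _ _ fun x _ => ?_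
  linarith [exitFun_le_ebar A 0, exitFun_nonneg A x, ebar_le A hq hA]

lemma HasDiscrepancy.half_le {D : ℝ} {r : Site d → ℕ → Dir d} (hr : HasDiscrepancy d D r) :
    1 / 2 ≤ D := by
  have hd : (1 : ℝ) ≤ d := Nat.one_le_cast.2 NeZero.one_le
  have hle := (le_abs_self _).trans (hr.abs_card_sub_le 0 (r 0 0) 1)
  have hinv : 1 / (2 * (d : ℝ)) ≤ 1 / 2 := by gcongr; linarith
  have hcard : ((Finset.range 1).filter fun i => r 0 i = r 0 0).card = 1 := by
    rw [Finset.filter_true_of_mem (by simp), Finset.card_range]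
  rw [hcard, Nat.cast_one] at hle
  linarith

lemma HasDiscrepancy.sum_nsq_le_of_card_le {D q N : ℝ} {r : Site d → ℕ → Dir d}
    (hr : HasDiscrepancy d D r) {m : ℕ} {A : Finset (Site d)}
    (hA : (A : Set (Site d)) = (aggState r m).1) (hcard : (A.card : ℝ) ≤ N) (hq : 1 ≤ q)
    (hN : N ≤ q ^ d) :
    ∑ x ∈ A, nsq x ≤ ∑ x ∈ A, (exitFun d A 0 - exitFun d A x)
      + D * (4 * d * ∑ x ∈ A, enorm x + 19 * d ^ 3 * (N * q)) := by
  have hd : (1 : ℝ) ≤ d := Nat.one_le_cast.2 NeZero.one_le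
  have hD : 0 ≤ D := by linarith [hr.half_le]
  have hcard0 : (0 : ℝ) ≤ A.card := Nat.cast_nonneg _
  have hgrad : ∑ x ∈ A, gradNorm (exitFun d A) x ≤ 17 * d ^ 3 * (N * q) :=
    calc ∑ x ∈ A, gradNorm (exitFun d A) x ≤ 17 * d ^ 3 * q * A.card :=
          sum_gradNorm_exitFun_le hq (hcard.trans hN)
      _ ≤ 17 * d ^ 3 * q * N := by gcongr
      _ = 17 * d ^ 3 * (N * q) := by ring
  have hlinear : 2 * d * (A.card : ℝ) ≤ 2 * d ^ 3 * (N * q) := by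
    have hdd : (d : ℝ) ≤ d ^ 3 := le_self_pow₀ hd three_ne_zero
    have hNq : (A.card : ℝ) ≤ N * q :=
      hcard.trans (le_mul_of_one_le_right (hcard0.trans hcard) hq)
    gcongr
  refine (hr.sum_nsq_le hD hA).trans (add_le_add_right (mul_le_mul_of_nonneg_left ?_ hD) _)
  linarith

/- By Cauchy-Schwarz the first moment `W` of `A` satisfies `W ^ 2 ≤ N * ∑ ‖x‖ ^ 2`, while the second
moment is bounded linearly in `W`. -/
lemma HasDiscrepancy.sum_enorm_le {D q N : ℝ} {r : Site d → ℕ → Dir d}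
    (hr : HasDiscrepancy d D r) {m : ℕ} {A : Finset (Site d)}
    (hA : (A : Set (Site d)) = (aggState r m).1) (hcard : (A.card : ℝ) ≤ N) (hq : 1 ≤ q)
    (hN : N ≤ q ^ d) :
    ∑ x ∈ A, enorm x
      ≤ (1 + 48 * 2 ^ d * d ^ 3 + 4 * d + 19 * d ^ 3) * (N * q + D * N) := by
  have hD : 0 ≤ D := by linarith [hr.half_le]
  have hN0 : 0 ≤ N := (Nat.cast_nonneg _).trans hcard
  set W := ∑ x ∈ A, enorm x
  have hexit : ∑ x ∈ A, (exitFun d A 0 - exitFun d A x) ≤ N * (48 * 2 ^ d * d ^ 3 * q ^ 2) := by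
    refine (sum_exitFun_zero_sub_le_card_mul A (by linarith) (hcard.trans hN)).trans ?_
    gcongr
  have hpsi0 : 0 ≤ ∑ x ∈ A, nsq x :=
    Finset.sum_nonneg fun x _ => Finset.sum_nonneg fun i _ => sq_nonneg _
  refine le_mul_add_of_sq_le (by positivity) (by positivity) (by positivity) (by positivity)
    (by positivity) ?_
  calc W ^ 2 ≤ N * ∑ x ∈ A, nsq x :=
        (sq_sum_enorm_le A).trans (mul_le_mul_of_nonneg_right hcard hpsi0)
    _ ≤ N * (N * (48 * 2 ^ d * d ^ 3 * q ^ 2) + D * (4 * d * W + 19 * d ^ 3 * (N * q))) := by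
        gcongr
        exact (hr.sum_nsq_le_of_card_le hA hcard hq hN).trans (add_le_add_left hexit _)
    _ = _ := by ring

lemma HasDiscrepancy.exists_sum_nsq_le (d : ℕ) [NeZero d] : ∃ C : ℝ, (d : ℝ) ≤ C ∧
    ∀ {D q N : ℝ} {r : Site d → ℕ → Dir d}, HasDiscrepancy d D r → ∀ {m : ℕ} {A : Finset (Site d)},
      (A : Set (Site d)) = (aggState r m).1 → (A.card : ℝ) ≤ N → 1 ≤ q → N ≤ q ^ d →
        ∑ x ∈ A, nsq x ≤ ∑ x ∈ A, (exitFun d A 0 - exitFun d A x) + C * N * (D * q + D ^ 2) := by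
  have hd : (1 : ℝ) ≤ d := Nat.one_le_cast.2 NeZero.one_le
  set c : ℝ := 1 + 48 * 2 ^ d * d ^ 3 + 4 * d + 19 * d ^ 3 with hc
  have hc1 : 1 ≤ c := by
    rw [hc, add_assoc, add_assoc]
    exact le_add_of_nonneg_right (by positivity)
  refine ⟨4 * d * c + 19 * d ^ 3, ?_, ?_⟩
  · have : 0 ≤ 19 * (d : ℝ) ^ 3 := by positivity
    nlinarith
  intro D q N r hr m A hA hcard hq hN
  have hD : 0 ≤ D := by linarith [hr.half_le]
  have hN0 : 0 ≤ N := (Nat.cast_nonneg _).trans hcard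
  refine (hr.sum_nsq_le_of_card_le hA hcard hq hN).trans (add_le_add_right ?_ _)
  calc D * (4 * d * ∑ x ∈ A, enorm x + 19 * d ^ 3 * (N * q))
      ≤ D * (4 * d * (c * (N * q + D * N)) + 19 * d ^ 3 * (N * q)) := by
        gcongr
        exact hr.sum_enorm_le hA hcard hq hN
    _ = (4 * d * c + 19 * d ^ 3) * N * (D * q) + 4 * d * c * N * D ^ 2 := by ring
    _ ≤ (4 * d * c + 19 * d ^ 3) * N * (D * q) + (4 * d * c + 19 * d ^ 3) * N * D ^ 2 := by
        gcongr
        exact le_add_of_nonneg_right (by positivity)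
    _ = _ := by ring

/- If `D ≥ n`, the bound `‖x‖ ≤ √d * n` on `A_n` is better than the one in terms of `D`. -/
lemma HasDiscrepancy.exists_psi_aggRegion_le (d : ℕ) [NeZero d] : ∃ C : ℝ, 0 ≤ C ∧
    ∀ {D : ℝ} {r : Site d → ℕ → Dir d}, HasDiscrepancy d D r → ∀ {n : ℕ}, 1 ≤ n →
      psi (aggRegion r n) ≤ ∑ j ∈ Finset.Icc 1 n, (phi d j + exitFun d (lball d j) 0)
        + C * n * (D * (n : ℝ) ^ (1 / (d : ℝ)) + min D n ^ 2) := by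
  obtain ⟨C, hdC, hC⟩ := exists_sum_nsq_le d
  have hC0 : 0 ≤ C := (Nat.cast_nonneg d).trans hdC
  refine ⟨C, hC0, fun {D r} hr {n} hn => ?_⟩
  have hD : 0 ≤ D := by linarith [hr.half_le]
  obtain ⟨A, hA⟩ := (finite_aggState r (n - 1)).exists_finset_coe
  have hcard : A.card ≤ n := by
    rw [← Set.ncard_coe_finset, hA]
    exact (ncard_aggState_le r (n - 1)).trans_eq (Nat.sub_add_cancel hn)
  rw [psi, aggRegion, ← hA, finsum_mem_coe_finset]
  rcases le_total D n with hDn | hDn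
  · have hq : 1 ≤ (n : ℝ) ^ (1 / (d : ℝ)) := Real.one_le_rpow (by exact_mod_cast hn) (by positivity)
    have hqd : ((n : ℝ) ^ (1 / (d : ℝ))) ^ d = n := by
      rw [one_div, Real.rpow_inv_natCast_pow n.cast_nonneg (NeZero.ne d)]
    rw [min_eq_left hDn]
    exact (hC hr hA (by exact_mod_cast hcard) hq hqd.ge).trans
      (add_le_add_left (sum_exitFun_zero_sub_le hcard) _)
  · have habs (x) (hx : x ∈ A) (i) : |x i| ≤ n :=
      (abs_le_of_mem_aggState (hA ▸ Finset.mem_coe.2 hx) i).trans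
        (by exact_mod_cast n.sub_le 1)
    rw [min_eq_right hDn]
    calc ∑ x ∈ A, nsq x ≤ d * (n : ℝ) ^ 3 := sum_nsq_le_of_abs_le hcard habs
      _ ≤ C * n * (n : ℝ) ^ 2 := by
          rw [mul_assoc, ← pow_succ']
          gcongr
      _ ≤ C * n * (D * (n : ℝ) ^ (1 / (d : ℝ)) + (n : ℝ) ^ 2) := by
          gcongr
          exact le_add_of_nonneg_left (by positivity)
      _ ≤ _ := le_add_of_nonneg_left (Finset.sum_nonneg fun j _ => phi_add_exitFun_nonneg j)

lemma le_two_mul_rpow {x s : ℝ} (hx : 1 / 2 ≤ x) (hs : 1 ≤ s) (hs2 : s ≤ 2) : x ≤ 2 * x ^ s := by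
  have hpow : 2 * x ≤ 2 ^ (2 : ℝ) * x ^ s :=
    calc 2 * x ≤ (2 * x) ^ s := Real.self_le_rpow_of_one_le (by linarith) hs
      _ = 2 ^ s * x ^ s := Real.mul_rpow zero_le_two (by linarith)
      _ ≤ 2 ^ (2 : ℝ) * x ^ s := by
          gcongr
          exact one_le_two
  rw [Real.rpow_two] at hpow
  linarith

theorem main_prop_general (d : ℕ) (hd : 1 ≤ d) :
    ∃ C : ℝ, 0 ≤ C ∧ ∀ (D : ℝ) (r : Site d → ℕ → Dir d), HasDiscrepancy d D r →
      ∀ n : ℕ, 1 ≤ n →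
        psi (aggRegion r n) ≤ psi (lball d n) + PhiSum d n
          + C * D ^ (2 - 1 / (d : ℝ)) * (n : ℝ) ^ (1 + 1 / (d : ℝ)) := by
  have : NeZero d := ⟨by lia⟩
  have hinv : 1 / (d : ℝ) ≤ 1 := (div_le_one (by positivity)).2 (Nat.one_le_cast.2 hd)
  obtain ⟨C₁, hC₁, hexit⟩ := exists_sum_phi_add_exitFun_le d
  obtain ⟨C₂, hC₂, hpsi⟩ := HasDiscrepancy.exists_psi_aggRegion_le d
  refine ⟨4 * C₁ + 3 * C₂, by positivity, fun D r hr n hn => ?_⟩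
  have hD := hr.half_le
  have hn0 : (0 : ℝ) < n := by exact_mod_cast hn
  set q : ℝ := (n : ℝ) ^ (1 / (d : ℝ))
  set Z : ℝ := D ^ (2 - 1 / (d : ℝ))
  have hDZ : D ≤ 2 * Z := le_two_mul_rpow hD (by linarith) (sub_le_self _ (by positivity))
  have hmin : min D n ^ 2 ≤ Z * q :=
    sq_min_le_rpow_mul_rpow (by linarith) hn0 (by positivity) (by linarith)
  have hZ1 : 1 ≤ 4 * Z := by linarith
  calc psi (aggRegion r n)
      ≤ psi (lball d n) + PhiSum d n + C₁ * (n * q) * 1 + C₂ * n * (D * q + min D n ^ 2) := by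
        linarith [hpsi hr hn, hexit hn]
    _ ≤ psi (lball d n) + PhiSum d n + C₁ * (n * q) * (4 * Z)
          + C₂ * n * (2 * Z * q + Z * q) := by gcongr
    _ = psi (lball d n) + PhiSum d n + (4 * C₁ + 3 * C₂) * Z * (n : ℝ) ^ (1 + 1 / (d : ℝ)) := by
        rw [Real.rpow_one_add' n.cast_nonneg (by positivity)]
        ring

end Assembly

theorem main_prop (d : ℕ) (hd : 1 ≤ d) :
    ∃ C : ℝ, ∀ (D : ℝ), 1 ≤ D → ∀ r : Site d → ℕ → Dir d, HasDiscrepancy d D r →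
      ∀ n : ℕ, 1 ≤ n →
        psi (aggRegion r n) ≤ psi (lball d n) + PhiSum d n
          + C * D ^ (2 - 1 / (4 * (d : ℝ))) * (n : ℝ) ^ (1 + 1 / (d : ℝ)) := by
  obtain ⟨C, hC0, hC⟩ := main_prop_general d hd
  refine ⟨C, fun D hD r hr n hn => (hC D r hr n hn).trans ?_⟩
  gcongr
  linarith [(Nat.cast_nonneg d : (0 : ℝ) ≤ d)]

end RotorRouterPaper
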